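/- arXiv:1909.03618 — 13 statements merged into one kernel-verified Lean document; each statement's English description precedes it below -/
import Mathlib

section
/- Let (Ω, P) be a probability space and let X₁, X₂ : Ω → ℝ be independent random variables such that E[X₁²] ≤ 1 (and X₁² is integrable). Then the expected payoff of player 1 in the bias-variance game is non-negative: E[(1 − X₁²)·𝟙{|X₁| < |X₂|} + (1/2)·(1 − X₁²)·𝟙{|X₁| = |X₂|}] ≥ 0. -/
open MeasureTheory ProbabilityTheory

theorem bias_variance_game_individually_rational
    {Ω : Type*} [MeasurableSpace Ω] (P : Measure Ω) [IsProbabilityMeasure P]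
    (X₁ X₂ : Ω → ℝ) (hX₁ : Measurable X₁) (hX₂ : Measurable X₂)
    (hindep : IndepFun X₁ X₂ P)
    (hint : Integrable (fun ω => (X₁ ω)^2) P)
    (hIR : ∫ ω, (X₁ ω)^2 ∂P ≤ 1) :
    0 ≤ ∫ ω, ((1 - (X₁ ω)^2) * (if |X₁ ω| < |X₂ ω| then 1 else 0)
        + (1/2) * (1 - (X₁ ω)^2) * (if |X₁ ω| = |X₂ ω| then 1 else 0)) ∂P := by
  have ha₁ : Measurable (fun ω => |X₁ ω|) := by fun_prop
  have ha₂ : Measurable (fun ω => |X₂ ω|) := by fun_prop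
  let f : ℝ → ℝ := fun x => 1 - x^2
  let g : ℝ → ℝ := fun y => (if 1 < |y| then 1 else 0) + (1/2) * (if 1 = |y| then 1 else 0)
  have hf : Measurable f := by fun_prop
  have habs : Measurable (fun y : ℝ => |y|) := by fun_prop
  have hg : Measurable g :=
    (Measurable.ite (measurableSet_lt measurable_const habs) measurable_const
      measurable_const).add ((Measurable.ite (measurableSet_eq_fun measurable_const habs)
      measurable_const measurable_const).const_mul _)
  have hg0 : ∀ y, 0 ≤ g y := by
    intro y; simp only [g]; split_ifs <;> norm_num
  have hg1 : ∀ y, g y ≤ 2 := by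
    intro y; simp only [g]; split_ifs <;> norm_num
  have hfi : Integrable (fun ω => f (X₁ ω)) P := (integrable_const 1).sub hint
  have hf0 : 0 ≤ ∫ ω, f (X₁ ω) ∂P := by
    simp only [f]
    rw [integral_sub (integrable_const 1) hint]
    simpa using hIR
  have hind : IndepFun (fun ω => f (X₁ ω)) (fun ω => g (X₂ ω)) P := hindep.comp hf hg
  have hprod : ∫ ω, f (X₁ ω) * g (X₂ ω) ∂P = (∫ ω, f (X₁ ω) ∂P) * ∫ ω, g (X₂ ω) ∂P :=
    hind.integral_fun_mul_eq_mul_integral (hf.comp hX₁).aestronglyMeasurable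
      (hg.comp hX₂).aestronglyMeasurable
  have h0 : 0 ≤ ∫ ω, f (X₁ ω) * g (X₂ ω) ∂P := by
    rw [hprod]
    exact mul_nonneg hf0 (integral_nonneg fun ω => hg0 _)
  refine h0.trans (integral_mono ?_ ?_ ?_)
  · refine hfi.mul_bdd (c := 2) (hg.comp hX₂).aestronglyMeasurable (ae_of_all _ fun ω => ?_)
    simpa [abs_of_nonneg (hg0 _)] using hg1 (X₂ ω)
  · refine Integrable.add ?_ ?_
    · refine hfi.mul_bdd (c := 1) (Measurable.ite (measurableSet_lt ha₁ ha₂) measurable_const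
        measurable_const).aestronglyMeasurable (ae_of_all _ fun ω => ?_)
      split_ifs <;> norm_num
    · refine (hfi.const_mul (1/2)).mul_bdd (c := 1) (Measurable.ite (measurableSet_eq_fun ha₁ ha₂)
        measurable_const measurable_const).aestronglyMeasurable (ae_of_all _ fun ω => ?_)
      split_ifs <;> norm_num
  · intro ω
    simp only [f, g]
    rw [← sq_abs (X₁ ω)]
    have hx := abs_nonneg (X₁ ω)
    generalize |X₁ ω| = x at *
    generalize |X₂ ω| = y at *
    rcases le_total x 1 with h | h
    · have : 0 ≤ 1 - x^2 := by nlinarith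
      split_ifs <;> first | (exfalso; grind) | nlinarith
    · have : 1 - x^2 ≤ 0 := by nlinarith
      split_ifs <;> first | nlinarith | (have : x = 1 := by linarith
                                         subst this; norm_num) | (exfalso; grind)
end

section
/- Let g : ℝ → ℝ be a probability density function (g ≥ 0 and ∫ g = 1) that is symmetric about 0 (g(−x) = g(x) for all x), nondecreasing on (−∞, 0], and convex on (−∞, 0]. Let σ > 0 and μ ≥ 0 satisfy μ² + σ² ≤ 1. Then for every real number c, ∫_{−|c|}^{|c|} (1 − x²) · σ⁻¹ g(x/σ) dx ≥ ∫_{−|c|}^{|c|} (1 − x²) · σ⁻¹ g((x − μ)/σ) dx. In words: against any realization c of the opponent, a player's ex post expected payoff in the bias-variance game from the centered distribution σZ is at least that from the shifted distribution σZ + μ. -/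
open MeasureTheory

lemma aux_core (f : ℝ → ℝ) (hf : Integrable f) (hs : ∀ x, f (-x) = f x)
    (ha : ∀ x y, |x| ≤ |y| → f y ≤ f x) (μ : ℝ) (hμ : 0 ≤ μ) (hμ1 : μ ≤ 1)
    (hc : ∀ x, μ ≤ |x| → 2 * f x ≤ f (x - μ) + f (x + μ)) (C : ℝ) (hC : 0 ≤ C) :
    ∫ x in (-C)..C, (1 - x^2) * f (x - μ) ≤ ∫ x in (-C)..C, (1 - x^2) * f x := by
  have hf2 : Integrable (fun x => f (x - μ)) := hf.comp_sub_right μ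
  set h : ℝ → ℝ := fun x => f x - f (x - μ) with hh
  have hhi : Integrable h := hf.sub hf2
  set P : ℝ → ℝ := (Set.Icc (-C) C).indicator (fun x => max (1 - x^2) 0) with hP
  set N : ℝ → ℝ := (Set.Icc (-C) C).indicator (fun x => min (1 - x^2) 0) with hN
  have hPm : Measurable P := Measurable.indicator (by fun_prop) measurableSet_Icc
  have hNm : Measurable N := Measurable.indicator (by fun_prop) measurableSet_Icc
  have hPb : ∀ x, ‖P x‖ ≤ 1 := by
    intro x
    rw [hP, Real.norm_eq_abs, Set.indicator_apply]
    split_ifs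
    · rw [abs_of_nonneg (le_max_right _ _)]
      exact max_le (by nlinarith [sq_nonneg x]) zero_le_one
    · simp
  have hNb : ∀ x, ‖N x‖ ≤ C^2 := by
    intro x
    rw [hN, Real.norm_eq_abs, Set.indicator_apply]
    split_ifs with hx
    · rw [abs_of_nonpos (min_le_right _ _), neg_le]
      exact le_min (by nlinarith [hx.1, hx.2]) (by nlinarith)
    · simp; positivity
  have hPi : Integrable (fun x => P x * h x) :=
    hhi.bdd_mul hPm.aestronglyMeasurable (Filter.Eventually.of_forall hPb)
  have hNi : Integrable (fun x => N x * h x) :=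
    hhi.bdd_mul hNm.aestronglyMeasurable (Filter.Eventually.of_forall hNb)
  have hPa : ∀ x y, |x| ≤ |y| → P y ≤ P x := by
    intro x y hxy
    rw [hP, Set.indicator_apply, Set.indicator_apply]
    simp only [Set.mem_Icc, ← abs_le]
    have := sq_le_sq.2 hxy
    split_ifs with h1 h2 h2
    · exact max_le_max (by linarith) le_rfl
    · exact absurd (hxy.trans h1) h2
    · exact le_max_right _ _
    · exact le_rfl
  have hNs : ∀ x, N (-x) = N x := by
    intro x
    rw [hN, Set.indicator_apply, Set.indicator_apply]
    simp only [Set.mem_Icc, ← abs_le, abs_neg, neg_sq]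
  have hanti : ∀ x, h (μ - x) = - h x := by
    intro x
    simp only [hh]
    rw [show μ - x - μ = -x by ring, hs, ← hs (μ - x), neg_sub]; ring
  have key1 : 0 ≤ ∫ x, P x * h x := by
    have e : ∫ x, P (μ - x) * h (μ - x) = ∫ x, P x * h x :=
      integral_sub_left_eq_self (fun x => P x * h x) volume μ
    have i2 : Integrable (fun x => P (μ - x) * h (μ - x)) := hPi.comp_sub_left μ
    have s := integral_add hPi i2
    have : 0 ≤ ∫ x, (P x * h x + P (μ - x) * h (μ - x)) := by
      apply integral_nonneg
      intro x
      simp only [Pi.zero_apply]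
      rw [hanti, show P x * h x + P (μ - x) * -h x = (P x - P (μ - x)) * h x by ring]
      rcases le_total |x| |μ - x| with hx | hx
      · exact mul_nonneg (sub_nonneg.2 (hPa _ _ hx))
          (sub_nonneg.2 (ha _ _ (by rwa [abs_sub_comm x μ])))
      · exact mul_nonneg_of_nonpos_of_nonpos (sub_nonpos.2 (hPa _ _ hx))
          (sub_nonpos.2 (ha _ _ (by rwa [abs_sub_comm x μ])))
    linarith
  have key2 : 0 ≤ ∫ x, N x * h x := by
    have e : ∫ x, N (-x) * h (-x) = ∫ x, N x * h x :=
      integral_neg_eq_self (fun x => N x * h x) volume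
    have i2 : Integrable (fun x => N (-x) * h (-x)) := hNi.comp_neg
    have s := integral_add hNi i2
    have : 0 ≤ ∫ x, (N x * h x + N (-x) * h (-x)) := by
      apply integral_nonneg
      intro x
      simp only [Pi.zero_apply]
      rw [hNs, ← mul_add]
      have hx0 : h x + h (-x) = 2 * f x - (f (x - μ) + f (x + μ)) := by
        simp only [hh]
        rw [hs x, show -x - μ = -(x + μ) by ring, hs]; ring
      rw [hx0]
      rcases le_total |x| 1 with hx | hx
      · have : N x = 0 := by
          rw [hN, Set.indicator_apply]
          have : x^2 ≤ 1 := by rw [← sq_abs]; nlinarith [abs_nonneg x]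
          rw [min_eq_right (by linarith), ite_self]
        simp [this]
      · apply mul_nonneg_of_nonpos_of_nonpos
        · rw [hN]
          exact Set.indicator_nonpos (fun x _ => min_le_right _ _) x
        · linarith [hc x (hμ1.trans hx)]
    linarith
  have tot : ∫ x in (-C)..C, (1 - x^2) * h x = (∫ x, P x * h x) + ∫ x, N x * h x := by
    rw [intervalIntegral.integral_of_le (by linarith), ← integral_Icc_eq_integral_Ioc,
      ← integral_indicator measurableSet_Icc, ← integral_add hPi hNi]
    congr 1
    ext x
    simp only [hP, hN, Set.indicator_apply]
    split_ifs
    · rw [← add_mul, max_add_min, add_zero]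
    · simp
  have ii : ∀ k : ℝ → ℝ, Integrable k →
      IntervalIntegrable (fun x => (1 - x^2) * k x) volume (-C) C := fun k hk =>
    hk.intervalIntegrable.continuousOn_mul (by fun_prop)
  have := intervalIntegral.integral_sub (ii f hf) (ii _ hf2)
  simp only [hh, mul_sub] at tot
  simp only [hh, mul_sub] at key1 key2
  linarith

theorem lower_bias_beneficial_fixed_variance
    (g : ℝ → ℝ) (hg_nonneg : ∀ x, 0 ≤ g x) (hg_int : ∫ x, g x = 1)
    (hg_symm : ∀ x, g (-x) = g x)
    (hg_mono : MonotoneOn g (Set.Iic 0))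
    (hg_convex : ConvexOn ℝ (Set.Iic 0) g)
    (σ μ : ℝ) (hσ : 0 < σ) (hμ : 0 ≤ μ) (hIR : μ^2 + σ^2 ≤ 1) (c : ℝ) :
    ∫ x in (-|c|)..|c|, (1 - x^2) * (σ⁻¹ * g (x / σ))
      ≥ ∫ x in (-|c|)..|c|, (1 - x^2) * (σ⁻¹ * g ((x - μ) / σ)) := by
  have hgi : Integrable g := by
    by_contra hn
    rw [integral_undef hn] at hg_int
    exact zero_ne_one hg_int
  have hσi : 0 ≤ σ⁻¹ := by positivity
  have gabs : ∀ x, g x = g (-|x|) := by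
    intro x
    rcases abs_choice x with e | e <;> rw [e]
    · rw [hg_symm]
    · rw [neg_neg]
  refine aux_core (fun x => σ⁻¹ * g (x / σ)) ?_ ?_ ?_ μ hμ (by nlinarith) ?_ |c| (abs_nonneg c)
  · exact (hgi.comp_div hσ.ne').const_mul _
  · intro x
    simp only [neg_div, hg_symm]
  · intro x y hxy
    apply mul_le_mul_of_nonneg_left _ hσi
    rw [gabs (x / σ), gabs (y / σ)]
    apply hg_mono
    · simp
    · simp
    · rw [abs_div, abs_div, neg_le_neg_iff]
      gcongr
  · have pos : ∀ x, μ ≤ x → 2 * g (x / σ) ≤ g ((x - μ) / σ) + g ((x + μ) / σ) := by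
      intro x hx
      have m1 : -((x - μ) / σ) ∈ Set.Iic (0:ℝ) := by
        have : 0 ≤ (x - μ) / σ := div_nonneg (by linarith) hσ.le
        simpa using this
      have m2 : -((x + μ) / σ) ∈ Set.Iic (0:ℝ) := by
        have : 0 ≤ (x + μ) / σ := div_nonneg (by linarith) hσ.le
        simpa using this
      have := hg_convex.2 m1 m2 (show (0:ℝ) ≤ 1/2 by norm_num) (show (0:ℝ) ≤ 1/2 by norm_num)
        (by norm_num)
      simp only [smul_eq_mul] at this
      rw [show 1 / 2 * -((x - μ) / σ) + 1 / 2 * -((x + μ) / σ) = -(x / σ) by ring,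
        hg_symm, hg_symm, hg_symm] at this
      linarith
    intro x hx
    have : 2 * g (x / σ) ≤ g ((x - μ) / σ) + g ((x + μ) / σ) := by
      rcases le_total 0 x with h0 | h0
      · exact pos x (by rwa [abs_of_nonneg h0] at hx)
      · have := pos (-x) (by rwa [abs_of_nonpos h0] at hx)
        rw [show (-x - μ) / σ = -((x + μ) / σ) by ring,
          show (-x + μ) / σ = -((x - μ) / σ) by ring, neg_div, hg_symm, hg_symm, hg_symm] at this
        linarith
    nlinarith [mul_le_mul_of_nonneg_left this hσi]
end

section
/- Let φ_{μ,σ}(x) = (1/(σ√(2π))) · exp(−(x − μ)²/(2σ²)) denote the normal density with mean μ and standard deviation σ. Let σ > 0 and μ ≥ 0 satisfy μ + σ ≤ 1. Then for every real number c, ∫_{−|c|}^{|c|} (1 − x²) φ_{0,σ}(x) dx ≥ ∫_{−|c|}^{|c|} (1 − x²) φ_{μ,σ}(x) dx. In words: for normally distributed predictions with fixed variance, against any realization c of the opponent, the ex post expected payoff in the bias-variance game from the zero-bias normal distribution N(0, σ²) is at least that from N(μ, σ²). -/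
/-- The density of the normal distribution with mean `μ` and standard deviation `σ`. -/
noncomputable def normalPDF (μ σ x : ℝ) : ℝ :=
  (1 / (σ * Real.sqrt (2 * Real.pi))) * Real.exp (-(x - μ)^2 / (2 * σ^2))

theorem lbn_cosh_bound (m : ℝ) (hm : 0 ≤ m) : Real.exp (m^2/2) ≤ Real.cosh (m*(m+1)) := by
  rcases le_total m 1 with h | h
  · have h1 : Real.exp (m^2/2) ≤ 1 + m^2/2 + (m^2/2)^2 := by
      have h0 : |m^2/2| ≤ 1 := by rw [abs_of_nonneg (by positivity)]; nlinarith
      have := Real.abs_exp_sub_one_sub_id_le h0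
      have := (abs_le.1 this).2
      linarith
    have h2 : 1 + (m*(m+1))^2/2 ≤ Real.cosh (m*(m+1)) := by
      have hz : 0 ≤ m*(m+1) := by positivity
      have h3 : Real.cosh (m*(m+1)) = 1 + 2 * Real.sinh (m*(m+1)/2)^2 := by
        have := Real.cosh_two_mul (m*(m+1)/2)
        rw [Real.cosh_sq] at this
        rw [show m*(m+1) = 2*(m*(m+1)/2) by ring, this]; ring_nf
      have h4 : m*(m+1)/2 ≤ Real.sinh (m*(m+1)/2) := Real.self_le_sinh_iff.2 (by positivity)
      have h5 : (m*(m+1)/2)^2 ≤ Real.sinh (m*(m+1)/2)^2 := by gcongr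
      nlinarith
    have : 0 ≤ m^3 * (1 - m) := mul_nonneg (by positivity) (by linarith)
    have : 0 ≤ m^3 := by positivity
    have : 0 ≤ m^4 := by positivity
    nlinarith
  · rw [Real.cosh_eq]
    have h1 : Real.exp (m*(m+1)) = Real.exp (m^2/2) * Real.exp (m + m^2/2) := by
      rw [← Real.exp_add]; congr 1; ring
    have h2 : 2 ≤ Real.exp (m + m^2/2) := by
      have := Real.add_one_le_exp (m + m^2/2)
      nlinarith
    have h3 := Real.exp_pos (-(m*(m+1)))
    have h4 := Real.exp_pos (m^2/2)
    nlinarith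

noncomputable def lbnG (μ σ x : ℝ) : ℝ :=
  normalPDF 0 σ x - (normalPDF μ σ x + normalPDF μ σ (-x)) / 2

theorem lbn_cont (μ σ : ℝ) : Continuous (normalPDF μ σ) := by
  unfold normalPDF; fun_prop

theorem lbnG_cont (μ σ : ℝ) : Continuous (lbnG μ σ) := by
  have h1 := lbn_cont μ σ
  have h2 := lbn_cont 0 σ
  unfold lbnG; fun_prop

theorem lbnG_eq (μ σ x : ℝ) (hσ : 0 < σ) : lbnG μ σ x =
    (1 / (σ * Real.sqrt (2 * Real.pi))) * Real.exp (-x^2/(2*σ^2)) * Real.exp (-(μ/σ)^2/2) *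
      (Real.exp ((μ/σ)^2/2) - Real.cosh (x*μ/σ^2)) := by
  have e1 : Real.exp (-(x-μ)^2/(2*σ^2)) =
      Real.exp (-x^2/(2*σ^2)) * Real.exp (-(μ/σ)^2/2) * Real.exp (x*μ/σ^2) := by
    rw [← Real.exp_add, ← Real.exp_add]; congr 1; field_simp; ring
  have e2 : Real.exp (-(-x-μ)^2/(2*σ^2)) =
      Real.exp (-x^2/(2*σ^2)) * Real.exp (-(μ/σ)^2/2) * Real.exp (-(x*μ/σ^2)) := by
    rw [← Real.exp_add, ← Real.exp_add]; congr 1; field_simp; ring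
  have e3 : Real.exp (-(μ/σ)^2/2) * Real.exp ((μ/σ)^2/2) = 1 := by
    rw [← Real.exp_add, ← Real.exp_zero]; congr 1; ring
  unfold lbnG normalPDF
  rw [e1, e2, Real.cosh_eq, sub_zero]
  linear_combination (-(1 / (σ * Real.sqrt (2 * Real.pi))) * Real.exp (-x^2/(2*σ^2))) * e3

theorem lbnG_nonneg (μ σ x : ℝ) (hσ : 0 < σ)
    (h : Real.cosh (x*μ/σ^2) ≤ Real.exp ((μ/σ)^2/2)) : 0 ≤ lbnG μ σ x := by
  rw [lbnG_eq μ σ x hσ]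
  exact mul_nonneg (by positivity) (by linarith)

theorem lbnG_nonpos (μ σ x : ℝ) (hσ : 0 < σ)
    (h : Real.exp ((μ/σ)^2/2) ≤ Real.cosh (x*μ/σ^2)) : lbnG μ σ x ≤ 0 := by
  rw [lbnG_eq μ σ x hσ]
  exact mul_nonpos_of_nonneg_of_nonpos (by positivity) (by linarith)

theorem lbn_cosh_mono (μ σ x y : ℝ) (hσ : 0 < σ) (hμ : 0 ≤ μ) (h : |x| ≤ |y|) :
    Real.cosh (x*μ/σ^2) ≤ Real.cosh (y*μ/σ^2) := by
  rw [Real.cosh_le_cosh, mul_div_assoc, mul_div_assoc, abs_mul, abs_mul]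
  gcongr

theorem lbn_sym (f : ℝ → ℝ) (hf : Continuous f) (hev : ∀ x, f (-x) = f x) (μ σ c : ℝ) :
    ∫ x in (-c)..c, f x * lbnG μ σ x =
    (∫ x in (-c)..c, f x * normalPDF 0 σ x) - ∫ x in (-c)..c, f x * normalPDF μ σ x := by
  have h1 := lbn_cont μ σ
  have h2 := lbn_cont 0 σ
  have hr : ∫ x in (-c)..c, f x * normalPDF μ σ (-x) = ∫ x in (-c)..c, f x * normalPDF μ σ x := by
    have := intervalIntegral.integral_comp_neg (a := -c) (b := c)
      (fun x => f x * normalPDF μ σ x)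
    simpa [hev] using this
  have : ∀ x, f x * lbnG μ σ x = f x * normalPDF 0 σ x -
      ((1/2) * (f x * normalPDF μ σ x) + (1/2) * (f x * normalPDF μ σ (-x))) := by
    intro x; unfold lbnG; ring
  simp_rw [this]
  rw [intervalIntegral.integral_sub, intervalIntegral.integral_add,
    intervalIntegral.integral_const_mul, intervalIntegral.integral_const_mul, hr]
  · ring
  all_goals exact Continuous.intervalIntegrable (by fun_prop) _ _

theorem lbn_pdf_le (σ x y : ℝ) (hσ : 0 < σ) (h : x^2 ≤ y^2) :
    normalPDF 0 σ y ≤ normalPDF 0 σ x := by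
  unfold normalPDF
  simp only [sub_zero]
  gcongr

theorem lbn_shift (μ σ x : ℝ) : normalPDF μ σ x = normalPDF 0 σ (x - μ) := by
  unfold normalPDF; simp

theorem lbn_neg (σ x : ℝ) : normalPDF 0 σ (-x) = normalPDF 0 σ x := by
  unfold normalPDF; simp

theorem lbn_mass (μ σ c : ℝ) (hσ : 0 < σ) (hμ : 0 ≤ μ) (hc : 0 ≤ c) :
    ∫ x in (-c)..c, normalPDF μ σ x ≤ ∫ x in (-c)..c, normalPDF 0 σ x := by
  have h1 := lbn_cont μ σ
  have h2 := lbn_cont 0 σ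
  have hi : ∀ a b, IntervalIntegrable (normalPDF 0 σ) MeasureTheory.volume a b :=
    fun a b => h2.intervalIntegrable a b
  rcases le_total (2*c) μ with h | h
  · apply intervalIntegral.integral_mono_on (by linarith) (h1.intervalIntegrable _ _) (hi _ _)
    intro x hx
    rw [lbn_shift]
    apply lbn_pdf_le _ _ _ hσ
    nlinarith [hx.1, hx.2]
  · have e1 : ∫ x in (-c)..c, normalPDF μ σ x = ∫ x in (-c-μ)..(c-μ), normalPDF 0 σ x := by
      rw [← intervalIntegral.integral_comp_sub_right (normalPDF 0 σ) μ]
      simp_rw [lbn_shift μ σ]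
    have e2 : ∫ x in (-c-μ)..(-c), normalPDF 0 σ x = ∫ x in c..(c+μ), normalPDF 0 σ x := by
      have := intervalIntegral.integral_comp_neg (a := c) (b := c+μ) (normalPDF 0 σ)
      simp_rw [lbn_neg] at this
      rw [this]; congr 1; ring
    have e3 : ∫ x in c..(c+μ), normalPDF 0 σ x = ∫ x in (c-μ)..c, normalPDF 0 σ (x+μ) := by
      rw [intervalIntegral.integral_comp_add_right (normalPDF 0 σ) μ]; simp
    have e4 : ∫ x in (c-μ)..c, normalPDF 0 σ (x+μ) ≤ ∫ x in (c-μ)..c, normalPDF 0 σ x := by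
      apply intervalIntegral.integral_mono_on (by linarith)
        (Continuous.intervalIntegrable (by fun_prop) _ _) (hi _ _)
      intro x hx
      apply lbn_pdf_le _ _ _ hσ
      nlinarith [hx.1, hx.2]
    have e5 := intervalIntegral.integral_add_adjacent_intervals (hi (-c-μ) (-c)) (hi (-c) (c-μ))
    have e6 := intervalIntegral.integral_add_adjacent_intervals (hi (-c) (c-μ)) (hi (c-μ) c)
    linarith

theorem lbn_small (μ σ c : ℝ) (hσ : 0 < σ) (hμ : 0 ≤ μ) (hc : 0 ≤ c) (hc1 : c ≤ 1) :
    0 ≤ ∫ x in (-c)..c, (1 - x^2) * lbnG μ σ x := by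
  have hG := lbnG_cont μ σ
  rcases le_total (Real.cosh (c*μ/σ^2)) (Real.exp ((μ/σ)^2/2)) with h | h
  · apply intervalIntegral.integral_nonneg (by linarith)
    intro x hx
    have hx' : |x| ≤ |c| := by rw [abs_of_nonneg hc]; exact abs_le.2 hx
    apply mul_nonneg
    · nlinarith [hx.1, hx.2]
    · exact lbnG_nonneg μ σ x hσ ((lbn_cosh_mono μ σ x c hσ hμ hx').trans h)
  · have hcont : ContinuousOn (fun x : ℝ => Real.cosh (x*μ/σ^2)) (Set.Icc 0 c) := by
      apply Continuous.continuousOn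
      have := Real.continuous_cosh
      fun_prop
    obtain ⟨t, ht, hte⟩ := intermediate_value_Icc hc hcont
      (show Real.exp ((μ/σ)^2/2) ∈ _ from ⟨by simp; positivity, h⟩)
    simp only at hte
    have key : ∫ x in (-c)..c, (1 - t^2) * lbnG μ σ x ≤ ∫ x in (-c)..c, (1 - x^2) * lbnG μ σ x := by
      apply intervalIntegral.integral_mono_on (by linarith)
        (Continuous.intervalIntegrable (by fun_prop) _ _)
        (Continuous.intervalIntegrable (by fun_prop) _ _)
      intro x hx
      rcases le_total |x| |t| with hxt | hxt
      · have := lbnG_nonneg μ σ x hσ ((lbn_cosh_mono μ σ x t hσ hμ hxt).trans hte.le)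
        have := sq_le_sq.2 hxt
        gcongr
      · have := lbnG_nonpos μ σ x hσ (hte.ge.trans (lbn_cosh_mono μ σ t x hσ hμ hxt))
        have := sq_le_sq.2 hxt
        nlinarith
    refine le_trans ?_ key
    rw [intervalIntegral.integral_const_mul]
    apply mul_nonneg
    · nlinarith [ht.1, ht.2]
    · have := lbn_sym (fun _ => 1) continuous_const (fun _ => rfl) μ σ c
      simp only [one_mul] at this
      rw [this]
      linarith [lbn_mass μ σ c hσ hμ hc]

theorem lbn_tail (μ σ x : ℝ) (hσ : 0 < σ) (hμ : 0 ≤ μ) (hIR : μ + σ ≤ 1) (hx : 1 ≤ |x|) :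
    0 ≤ (1 - x^2) * lbnG μ σ x := by
  apply mul_nonneg_of_nonpos_of_nonpos
  · have := (sq_le_sq (a := (1:ℝ)) (b := x)).2 (by simpa using hx)
    linarith
  · apply lbnG_nonpos μ σ x hσ
    refine (lbn_cosh_bound (μ/σ) (by positivity)).trans ?_
    have e : μ/σ*(μ/σ+1) = (μ+σ)*μ/σ^2 := by field_simp
    rw [e]
    apply lbn_cosh_mono μ σ _ _ hσ hμ
    rw [abs_of_nonneg (by linarith)]
    linarith

theorem lower_bias_normal_fixed_variance (μ σ : ℝ) (hσ : 0 < σ) (hμ : 0 ≤ μ)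
    (hIR : μ + σ ≤ 1) (c : ℝ) :
    ∫ x in (-|c|)..|c|, (1 - x^2) * normalPDF 0 σ x
      ≥ ∫ x in (-|c|)..|c|, (1 - x^2) * normalPDF μ σ x := by
  have hs := lbn_sym (fun x => 1 - x^2) (by fun_prop) (by intro x; ring) μ σ |c|
  suffices h : 0 ≤ ∫ x in (-|c|)..|c|, (1 - x^2) * lbnG μ σ x by linarith
  clear hs
  have hG := lbnG_cont μ σ
  have hc : 0 ≤ |c| := abs_nonneg c
  generalize |c| = d at *
  rcases le_total d 1 with h | h
  · exact lbn_small μ σ d hσ hμ hc h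
  · have hi : ∀ a b, IntervalIntegrable (fun x => (1 - x^2) * lbnG μ σ x)
        MeasureTheory.volume a b :=
      fun a b => Continuous.intervalIntegrable (by fun_prop) a b
    rw [← intervalIntegral.integral_add_adjacent_intervals (hi (-d) (-1)) (hi (-1) d),
      ← intervalIntegral.integral_add_adjacent_intervals (hi (-1) 1) (hi 1 d)]
    have h1 := lbn_small μ σ 1 hσ hμ zero_le_one le_rfl
    have h2 : 0 ≤ ∫ x in (-d)..(-1), (1 - x^2) * lbnG μ σ x := by
      apply intervalIntegral.integral_nonneg (by linarith)
      intro x hx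
      exact lbn_tail μ σ x hσ hμ hIR (le_abs.2 (Or.inr (by linarith [hx.2])))
    have h3 : 0 ≤ ∫ x in (1)..d, (1 - x^2) * lbnG μ σ x := by
      apply intervalIntegral.integral_nonneg (by linarith)
      intro x hx
      exact lbn_tail μ σ x hσ hμ hIR (le_abs.2 (Or.inl hx.1))
    linarith
end

section
/- Let φ_{μ,σ}(x) = (1/(σ√(2π))) · exp(−(x − μ)²/(2σ²)) denote the normal density with mean μ and standard deviation σ. Let 0 ≤ ν ≤ μ < 1, and set σ = √(1 − μ²), τ = √(1 − ν²). Then for every real number a, ∫_{−|a|}^{|a|} (1 − x²) φ_{ν,τ}(x) dx ≥ ∫_{−|a|}^{|a|} (1 − x²) φ_{μ,σ}(x) dx. In words: among normal distributions with total error μ² + σ² = 1, against any realization a of the opponent, lower bias (with correspondingly higher variance) yields ex post expected payoff at least as large in the bias-variance game. -/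
open Real in
lemma aux_sinh_upper (t : ℝ) (ht : 0 ≤ t) :
    (6 + 3 * t^2) * sinh t ≤ (6 * t + t^3) * cosh t := by
  have hd : ∀ x : ℝ, HasDerivAt (fun t : ℝ => (6 * t + t^3) * cosh t - (6 + 3 * t^2) * sinh t)
      (x^3 * sinh x) x := by
    intro x
    have h1 : HasDerivAt (fun t : ℝ => 6 * t + t^3) (6 + 3 * x^2) x := by
      have := ((hasDerivAt_id x).const_mul 6).add (hasDerivAt_pow 3 x)
      refine HasDerivAt.congr_deriv this ?_
      norm_num
    have h2 : HasDerivAt (fun t : ℝ => 6 + 3 * t^2) (6 * x) x := by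
      have := ((hasDerivAt_pow 2 x).const_mul 3).const_add 6
      refine HasDerivAt.congr_deriv this ?_
      norm_num
      ring
    have := (h1.mul (hasDerivAt_cosh x)).sub (h2.mul (hasDerivAt_sinh x))
    refine HasDerivAt.congr_deriv this ?_
    ring
  have hm : MonotoneOn (fun t : ℝ => (6 * t + t^3) * cosh t - (6 + 3 * t^2) * sinh t)
      (Set.Ici 0) := by
    apply monotoneOn_of_deriv_nonneg (convex_Ici 0)
    · exact fun x _ => (hd x).continuousAt.continuousWithinAt
    · exact fun x _ => (hd x).differentiableAt.differentiableWithinAt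
    · intro x hx
      rw [interior_Ici] at hx
      have hx : 0 < x := hx
      rw [(hd x).deriv]
      have := sinh_nonneg_iff.2 hx.le
      positivity
  have := hm (Set.mem_Ici.2 le_rfl) (Set.mem_Ici.2 ht) ht
  simp at this
  linarith

open Real in
lemma aux_sinh_le (t : ℝ) (ht : 0 ≤ t) : sinh t ≤ t * cosh t := by
  have h := aux_sinh_upper t ht
  have hc := cosh_pos t
  have h3 : 0 ≤ t^3 * cosh t := by positivity
  have : (6 + 3 * t^2) * sinh t ≤ (6 + 3 * t^2) * (t * cosh t) := by nlinarith
  exact le_of_mul_le_mul_left this (by positivity)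

open Real in
lemma aux_sinh_lower (t : ℝ) (ht : 0 ≤ t) : t * cosh t ≤ (1 + t) * sinh t := by
  have h1 : t ≤ sinh t := self_le_sinh_iff.2 ht
  have h2 : cosh t - sinh t = exp (-t) := cosh_sub_sinh t
  have h3 : exp (-t) ≤ 1 := exp_le_one_iff.2 (by linarith)
  nlinarith

/-- The key inequality. -/
lemma aux_key (m A : ℝ) (hm : 0 ≤ m) (hm1 : m < 1) (hA : 0 ≤ A) :
    Real.sinh (A * m / (1 - m^2)) * (A^2 + 1 - 2 * m^2 - 2 * m^2 * (1 - m^2))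
      ≤ m * A * Real.cosh (A * m / (1 - m^2)) * (A^2 + 1 - 2 * m^2) := by
  have hs : 0 < 1 - m^2 := by nlinarith
  set s := 1 - m^2 with hsd
  set t := A * m / s with htd
  have ht : 0 ≤ t := by positivity
  have hts : t * s = A * m := by rw [htd]; field_simp
  have hU := aux_sinh_upper t ht
  have hL := aux_sinh_lower t ht
  have hT := aux_sinh_le t ht
  have hSC : Real.sinh t ≤ Real.cosh t := (Real.sinh_lt_cosh t).le
  have hS0 : 0 ≤ Real.sinh t := Real.sinh_nonneg_iff.2 ht
  have hC0 : 0 < Real.cosh t := Real.cosh_pos t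
  generalize Real.sinh t = S at *
  generalize Real.cosh t = C at *
  have hsT : s * S ≤ A * m * C := by
    have := mul_le_mul_of_nonneg_left hT hs.le
    calc s * S ≤ s * (t * C) := this
      _ = (t * s) * C := by ring
      _ = _ := by rw [hts]
  have hAm : 0 ≤ A * m := by positivity
  set q := A^2 + 1 - 2 * m^2 with hq
  rcases le_or_gt A 1 with hA1 | hA1
  · rcases le_or_gt 0 q with hq0 | hq0
    · rcases le_total S (m * A * C) with h | h
      · have : S * q ≤ m * A * C * q := mul_le_mul_of_nonneg_right h hq0
        have : 0 ≤ S * (2 * m^2 * s) := by positivity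
        linarith
      · have h1 : q ≤ 2 * s := by nlinarith
        have h2 : (S - m * A * C) * q ≤ (S - m * A * C) * (2 * s) :=
          mul_le_mul_of_nonneg_left h1 (by linarith)
        have h3 : (S - m * A * C) ≤ m^2 * S := by
          have : s * S = S - m^2 * S := by rw [hsd]; ring
          linarith
        have h4 := mul_le_mul_of_nonneg_right h3 (by linarith : 0 ≤ 2 * s)
        linarith
    · have hAm' : A ≤ m := by nlinarith
      have h1 : A * m * C ≤ (s + A * m) * S := by
        have := mul_le_mul_of_nonneg_left hL hs.le
        calc A * m * C = s * (t * C) := by rw [← hts]; ring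
          _ ≤ _ := this
          _ = (s + t * s) * S := by ring
          _ = _ := by rw [hts]
      have h2 : (s + A * m) * S ≤ 1 * S := mul_le_mul_of_nonneg_right (by nlinarith) hS0
      have h3 : S * q ≤ m * A * C * q := mul_le_mul_of_nonpos_right (by linarith) hq0.le
      have : 0 ≤ S * (2 * m^2 * s) := by positivity
      linarith
  · have hq0 : 0 ≤ q := by nlinarith
    rcases le_or_gt 1 (m + m^2) with hmm | hmm
    · have h1 : (1 - m * A) * q ≤ 2 * m^2 * s := by
        obtain ⟨d, rfl⟩ : ∃ d, A = 1 + d := ⟨A - 1, by ring⟩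
        have hd : 0 < d := by linarith
        have hm2 : 1 ≤ 2 * m := by nlinarith
        have e : 2 * m^2 * s - (1 - m * (1 + d)) * q
            = 2 * s * (m + m^2 - 1) + 2 * d * ((1 - m) * (m + m^2 - 1))
              + d^2 * (3 * m - 1) + m * d^3 := by
          rw [hq, hsd]; ring
        have a1 : 0 ≤ 2 * s * (m + m^2 - 1) := mul_nonneg (by linarith) (by linarith)
        have a2 : 0 ≤ 2 * d * ((1 - m) * (m + m^2 - 1)) :=
          mul_nonneg (by linarith) (mul_nonneg (by linarith) (by linarith))
        have a3 : 0 ≤ d^2 * (3 * m - 1) := mul_nonneg (by positivity) (by linarith)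
        have a4 : 0 ≤ m * d^3 := by positivity
        linarith
      rcases le_or_gt 0 (q - 2 * m^2 * s) with h | h
      · calc S * (q - 2 * m^2 * s) ≤ C * (q - 2 * m^2 * s) := mul_le_mul_of_nonneg_right hSC h
          _ ≤ C * (m * A * q) := mul_le_mul_of_nonneg_left (by linarith) hC0.le
          _ = _ := by ring
      · have : S * (q - 2 * m^2 * s) ≤ 0 := mul_nonpos_of_nonneg_of_nonpos hS0 h.le
        have : 0 ≤ m * A * C * q := by positivity
        linarith
    · -- the Padé-type bound
      have hn : m^2 ≤ 1/2 := by nlinarith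
      have hU' : (6 * s^2 + 3 * (A * m)^2) * (s * S) ≤ A * m * (6 * s^2 + (A * m)^2) * C := by
        have := mul_le_mul_of_nonneg_left hU (by positivity : 0 ≤ s^3)
        rw [← hts]
        nlinarith
      have hq2 : 0 ≤ q - 2 * m^2 * s := by
        have : q - 2 * m^2 * s = 2 * s^2 + (A^2 - 1) := by rw [hq, hsd]; ring
        rw [this]; nlinarith
      have hpoly : (6 * s^2 + (A * m)^2) * (q - 2 * m^2 * s)
          ≤ (6 * s^2 + 3 * (A * m)^2) * (s * q) := by
        obtain ⟨e, he⟩ : ∃ e, A^2 = 1 + e := ⟨A^2 - 1, by ring⟩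
        have he0 : 0 < e := by nlinarith
        have : (6 * s^2 + 3 * (A * m)^2) * (s * q) - (6 * s^2 + (A * m)^2) * (q - 2 * m^2 * s)
          = m^2 * (4 * s^2 + 2 * e * (m^2 * (1/2 - m^2)) + 2 * e^2 * (1 - 3/2 * m^2)) := by
          rw [hq, hsd, mul_pow, he]; ring
        have a1 : 0 ≤ 2 * e * (m^2 * (1/2 - m^2)) :=
          mul_nonneg (by linarith) (mul_nonneg (by positivity) (by linarith))
        have a2 : 0 ≤ 2 * e^2 * (1 - 3/2 * m^2) := mul_nonneg (by positivity) (by linarith)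
        have : 0 ≤ m^2 * (4 * s^2 + 2 * e * (m^2 * (1/2 - m^2)) + 2 * e^2 * (1 - 3/2 * m^2)) := by
          positivity
        linarith
      have hP : 0 < (6 * s^2 + 3 * (A * m)^2) * s := by positivity
      refine le_of_mul_le_mul_left ?_ hP
      calc (6 * s^2 + 3 * (A * m)^2) * s * (S * (q - 2 * m^2 * s))
          = ((6 * s^2 + 3 * (A * m)^2) * (s * S)) * (q - 2 * m^2 * s) := by ring
        _ ≤ (A * m * (6 * s^2 + (A * m)^2) * C) * (q - 2 * m^2 * s) :=
          mul_le_mul_of_nonneg_right hU' hq2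
        _ = (A * m * C) * ((6 * s^2 + (A * m)^2) * (q - 2 * m^2 * s)) := by ring
        _ ≤ (A * m * C) * ((6 * s^2 + 3 * (A * m)^2) * (s * q)) :=
          mul_le_mul_of_nonneg_left hpoly (by positivity)
        _ = _ := by ring

/-- Closed form (up to a constant) of the payoff. -/
noncomputable def auxF (A m : ℝ) : ℝ :=
  Real.sqrt (1 - m^2) * ((A + m) * Real.exp (-(A - m)^2 / (2 * (1 - m^2)))
    + (A - m) * Real.exp (-(A + m)^2 / (2 * (1 - m^2))))

lemma aux_integral (m A : ℝ) (hm : 0 ≤ m) (hm1 : m < 1) :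
    ∫ x in (-A)..A, (1 - x^2) * normalPDF m (Real.sqrt (1 - m^2)) x
      = 1 / Real.sqrt (2 * Real.pi) * auxF A m := by
  have hs : 0 < 1 - m^2 := by nlinarith
  have hsq : Real.sqrt (1 - m^2) ^ 2 = 1 - m^2 := Real.sq_sqrt hs.le
  have hs0 : 0 < Real.sqrt (1 - m^2) := Real.sqrt_pos.2 hs
  have hp : 0 < Real.sqrt (2 * Real.pi) := Real.sqrt_pos.2 (by positivity)
  unfold normalPDF auxF
  set σ := Real.sqrt (1 - m^2) with hσ
  rw [← hsq]
  have hd : ∀ x : ℝ, HasDerivAt (fun x : ℝ => (x + m) * σ^2 *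
      ((1 / (σ * Real.sqrt (2 * Real.pi))) * Real.exp (-(x - m)^2 / (2 * σ^2))))
      ((1 - x^2) * ((1 / (σ * Real.sqrt (2 * Real.pi))) * Real.exp (-(x - m)^2 / (2 * σ^2)))) x := by
    intro x
    have h1 : HasDerivAt (fun x : ℝ => -(x - m)^2 / (2 * σ^2)) (-(x - m) / σ^2) x := by
      have := ((((hasDerivAt_id x).sub_const m).pow 2).neg).div_const (2 * σ^2)
      refine HasDerivAt.congr_deriv this ?_
      simp; field_simp; ring
    have h2 := h1.exp.const_mul (1 / (σ * Real.sqrt (2 * Real.pi)))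
    have h3 : HasDerivAt (fun x : ℝ => (x + m) * σ^2) (σ^2) x := by
      simpa using ((hasDerivAt_id x).add_const m).mul_const (σ^2)
    have := h3.mul h2
    refine HasDerivAt.congr_deriv this ?_
    have : (1 - x^2) = σ^2 - (x + m) * (x - m) := by rw [hsq]; ring
    rw [this]
    field_simp
    ring
  rw [intervalIntegral.integral_eq_sub_of_hasDerivAt (fun x _ => hd x)]
  · have : (-A - m)^2 = (A + m)^2 := by ring
    rw [this]
    field_simp
    ring
  · apply Continuous.intervalIntegrable
    fun_prop

lemma aux_deriv (A m : ℝ) (hm : 0 ≤ m) (hm1 : m < 1) (hA : 0 ≤ A) :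
    ∃ d ≤ 0, HasDerivAt (auxF A) d m := by
  have hs : 0 < 1 - m^2 := by nlinarith
  have hs0 : 0 < Real.sqrt (1 - m^2) := Real.sqrt_pos.2 hs
  have hsq : Real.sqrt (1 - m^2) ^ 2 = 1 - m^2 := Real.sq_sqrt hs.le
  have h0 : HasDerivAt (fun m : ℝ => 1 - m^2) (-(2 * m)) m := by
    simpa using (hasDerivAt_pow 2 m).const_sub 1
  have hr : HasDerivAt (fun m : ℝ => Real.sqrt (1 - m^2))
      (Real.sqrt (1 - m^2) * (-m / (1 - m^2))) m := by
    refine HasDerivAt.congr_deriv (h0.sqrt hs.ne') ?_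
    field_simp
    rw [hsq]
  have he1 : HasDerivAt (fun m : ℝ => -(A - m)^2 / (2 * (1 - m^2)))
      ((A - m) * (1 - m * A) / (1 - m^2)^2) m := by
    have := ((((hasDerivAt_id m).const_sub A).pow 2).neg).div (h0.const_mul 2) (by positivity)
    refine HasDerivAt.congr_deriv this ?_
    simp; field_simp; ring
  have he2 : HasDerivAt (fun m : ℝ => -(A + m)^2 / (2 * (1 - m^2)))
      (-((A + m) * (1 + m * A)) / (1 - m^2)^2) m := by
    have := ((((hasDerivAt_id m).const_add A).pow 2).neg).div (h0.const_mul 2) (by positivity)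
    refine HasDerivAt.congr_deriv this ?_
    simp; field_simp; ring
  have hF := hr.mul ((((hasDerivAt_id m).const_add A).mul he1.exp).add
    (((hasDerivAt_id m).const_sub A).mul he2.exp))
  refine ⟨_, ?_, hF⟩
  have key := aux_key m A hm hm1 hA
  set s := 1 - m^2 with hsd
  set t := A * m / s with ht
  have E1 : Real.exp (-(A - m)^2 / (2 * s)) = Real.exp (-(A^2 + m^2) / (2 * s)) *
      (Real.cosh t + Real.sinh t) := by
    rw [Real.cosh_add_sinh, ← Real.exp_add]; congr 1; rw [ht]; field_simp; ring
  have E2 : Real.exp (-(A + m)^2 / (2 * s)) = Real.exp (-(A^2 + m^2) / (2 * s)) *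
      (Real.cosh t - Real.sinh t) := by
    rw [Real.cosh_sub_sinh, ← Real.exp_add]; congr 1; rw [ht]; field_simp; ring
  simp only [Pi.add_apply, Pi.mul_apply, id, ← hsd, E1, E2]
  have hB := Real.exp_pos (-(A^2 + m^2) / (2 * s))
  generalize Real.exp (-(A^2 + m^2) / (2 * s)) = B at *
  generalize Real.cosh t = C at *
  generalize Real.sinh t = S at *
  generalize Real.sqrt s = σ at *
  have : 0 ≤ (2 * σ * B / s^2) * (m * A * C * (A^2 + 1 - 2 * m^2) -
      S * (A^2 + 1 - 2 * m^2 - 2 * m^2 * s)) :=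
    mul_nonneg (by positivity) (by linarith)
  refine le_of_eq_of_le ?_ (neg_nonpos.2 this)
  field_simp
  rw [hsd]
  ring

theorem lower_bias_normal_under_tradeoff (μ ν : ℝ) (hν0 : 0 ≤ ν) (hνμ : ν ≤ μ)
    (hμ1 : μ < 1) (a : ℝ) :
    ∫ x in (-|a|)..|a|, (1 - x^2) * normalPDF ν (Real.sqrt (1 - ν^2)) x
      ≥ ∫ x in (-|a|)..|a|, (1 - x^2) * normalPDF μ (Real.sqrt (1 - μ^2)) x := by
  rw [aux_integral ν _ hν0 (by linarith), aux_integral μ _ (by linarith) hμ1]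
  refine mul_le_mul_of_nonneg_left ?_ (by positivity)
  have hanti : AntitoneOn (auxF |a|) (Set.Ico 0 1) := by
    apply antitoneOn_of_deriv_nonpos (convex_Ico 0 1)
    · intro x hx
      obtain ⟨d, -, h⟩ := aux_deriv |a| x hx.1 hx.2 (abs_nonneg a)
      exact h.continuousAt.continuousWithinAt
    · intro x hx
      have hx := interior_subset hx
      obtain ⟨d, -, h⟩ := aux_deriv |a| x hx.1 hx.2 (abs_nonneg a)
      exact h.differentiableAt.differentiableWithinAt
    · intro x hx
      have hx := interior_subset hx
      obtain ⟨d, h0, h⟩ := aux_deriv |a| x hx.1 hx.2 (abs_nonneg a)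
      rw [h.deriv]; exact h0
  exact hanti ⟨hν0, by linarith⟩ ⟨by linarith, hμ1⟩ hνμ
end

section
/- Let φ_{μ,σ}(x) = (1/(σ√(2π))) · exp(−(x − μ)²/(2σ²)) denote the normal density with mean μ and standard deviation σ, and let Φ denote the standard normal cumulative distribution function. Then for all μ ∈ ℝ, σ > 0, and a ≥ 0, ∫_{−a}^{a} x² φ_{μ,σ}(x) dx = −(μσ/√(2π)) · (exp(−(a−μ)²/(2σ²)) − exp(−(a+μ)²/(2σ²))) − (aσ/√(2π)) · (exp(−(a−μ)²/(2σ²)) + exp(−(a+μ)²/(2σ²))) + (σ² + μ²) · (Φ((a−μ)/σ) − Φ((−a−μ)/σ)). -/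
/-- The cumulative distribution function of the standard normal distribution. -/
noncomputable def stdNormalCDF (t : ℝ) : ℝ :=
  ∫ s in Set.Iic t, (1 / Real.sqrt (2 * Real.pi)) * Real.exp (-s^2 / 2)

lemma stdNormalCDF_hasDerivAt (t : ℝ) :
    HasDerivAt stdNormalCDF ((1 / Real.sqrt (2 * Real.pi)) * Real.exp (-t^2 / 2)) t := by
  have hc : Continuous
      (fun s : ℝ => (1 / Real.sqrt (2 * Real.pi)) * Real.exp (-s^2 / 2)) := by fun_prop
  have hi : MeasureTheory.Integrable
      (fun s : ℝ => (1 / Real.sqrt (2 * Real.pi)) * Real.exp (-s^2 / 2)) := by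
    refine MeasureTheory.Integrable.const_mul ?_ _
    have h := integrable_exp_neg_mul_sq (b := 1 / 2) (by norm_num)
    refine h.congr (Filter.Eventually.of_forall fun x => ?_)
    simp only
    congr 1
    ring
  have h1 : stdNormalCDF = fun t => stdNormalCDF 0 +
      ∫ s in (0:ℝ)..t, (1 / Real.sqrt (2 * Real.pi)) * Real.exp (-s^2 / 2) := by
    funext u
    rw [← intervalIntegral.integral_Iic_sub_Iic hi.integrableOn hi.integrableOn]
    simp only [stdNormalCDF]
    ring
  rw [h1]
  exact (hc.integral_hasStrictDerivAt 0 t).hasDerivAt.const_add _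

theorem truncated_second_moment_normal (μ σ a : ℝ) (hσ : 0 < σ) (ha : 0 ≤ a) :
    ∫ x in (-a)..a, x^2 * normalPDF μ σ x
      = -(μ * σ / Real.sqrt (2 * Real.pi))
          * (Real.exp (-(a - μ)^2 / (2 * σ^2)) - Real.exp (-(a + μ)^2 / (2 * σ^2)))
        - (a * σ / Real.sqrt (2 * Real.pi))
          * (Real.exp (-(a - μ)^2 / (2 * σ^2)) + Real.exp (-(a + μ)^2 / (2 * σ^2)))
        + (σ^2 + μ^2) * (stdNormalCDF ((a - μ) / σ) - stdNormalCDF ((-a - μ) / σ)) := by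
  have hs : Real.sqrt (2 * Real.pi) ≠ 0 := by positivity
  have hσ' : σ ≠ 0 := hσ.ne'
  have hd : ∀ x : ℝ, HasDerivAt (fun x => -(σ / Real.sqrt (2 * Real.pi)) *
      ((x + μ) * Real.exp (-(x - μ)^2 / (2 * σ^2)))
      + (σ^2 + μ^2) * stdNormalCDF ((x - μ) / σ)) (x^2 * normalPDF μ σ x) x := by
    intro x
    have hl : HasDerivAt (fun x : ℝ => (x - μ) / σ) (1 / σ) x :=
      ((hasDerivAt_id x).sub_const μ).div_const σ
    have hΦ := (stdNormalCDF_hasDerivAt ((x - μ) / σ)).comp x hl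
    have hq : HasDerivAt (fun x : ℝ => -(x - μ)^2 / (2 * σ^2)) (-(2 * (x - μ)) / (2 * σ^2)) x := by
      have := ((((hasDerivAt_id x).sub_const μ).pow 2).neg).div_const (2 * σ^2)
      refine HasDerivAt.congr_deriv this ?_
      simp
    have h := ((((hasDerivAt_id x).add_const μ).mul hq.exp).const_mul
      (-(σ / Real.sqrt (2 * Real.pi)))).add (hΦ.const_mul (σ^2 + μ^2))
    refine HasDerivAt.congr_deriv h ?_
    have he : -((x - μ) / σ)^2 / 2 = -(x - μ)^2 / (2 * σ^2) := by
      field_simp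
    rw [he]
    simp only [normalPDF, id]
    field_simp
    ring
  rw [intervalIntegral.integral_eq_sub_of_hasDerivAt (fun x _ => hd x)]
  · have he : -(-a - μ)^2 = -(a + μ)^2 := by ring
    rw [he]
    ring
  · apply Continuous.intervalIntegrable
    unfold normalPDF
    fun_prop
end

section
/- Let φ_{μ,σ}(x) = (1/(σ√(2π))) · exp(−(x − μ)²/(2σ²)) denote the normal density with mean μ and standard deviation σ. For 0 ≤ μ < 1, set σ = √(1 − μ²). Then for all a ≥ 0, ∫_{−a}^{a} (1 − x²) φ_{μ,σ}(x) dx = (μ√(1−μ²)/√(2π)) · (exp(−(a−μ)²/(2−2μ²)) − exp(−(a+μ)²/(2−2μ²))) + (a√(1−μ²)/√(2π)) · (exp(−(a−μ)²/(2−2μ²)) + exp(−(a+μ)²/(2−2μ²))). -/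
theorem ex_post_utility_closed_form (μ a : ℝ) (hμ0 : 0 ≤ μ) (hμ1 : μ < 1) (ha : 0 ≤ a) :
    ∫ x in (-a)..a, (1 - x^2) * normalPDF μ (Real.sqrt (1 - μ^2)) x
      = (μ * Real.sqrt (1 - μ^2) / Real.sqrt (2 * Real.pi))
          * (Real.exp (-(a - μ)^2 / (2 - 2*μ^2)) - Real.exp (-(a + μ)^2 / (2 - 2*μ^2)))
        + (a * Real.sqrt (1 - μ^2) / Real.sqrt (2 * Real.pi))
          * (Real.exp (-(a - μ)^2 / (2 - 2*μ^2)) + Real.exp (-(a + μ)^2 / (2 - 2*μ^2))) := by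
  have hs : 0 < 1 - μ^2 := by nlinarith
  have hsq : Real.sqrt (1 - μ^2) ^ 2 = 1 - μ^2 := Real.sq_sqrt hs.le
  have hspos : 0 < Real.sqrt (1 - μ^2) := Real.sqrt_pos.mpr hs
  have hp : 0 < Real.sqrt (2 * Real.pi) := Real.sqrt_pos.mpr (by positivity)
  have hd : 2 - 2 * μ^2 = 2 * Real.sqrt (1 - μ^2) ^ 2 := by rw [hsq]; ring
  rw [hd]
  generalize Real.sqrt (1 - μ^2) = s at *
  simp only [normalPDF]
  generalize Real.sqrt (2 * Real.pi) = p at *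
  have hF : ∀ x : ℝ, HasDerivAt
      (fun x => s / p * ((x + μ) * Real.exp (-(x - μ)^2 / (2 * s^2))))
      (s / p * (1 * Real.exp (-(x - μ)^2 / (2 * s^2)) + (x + μ) *
        (Real.exp (-(x - μ)^2 / (2 * s^2)) * (-(2 * (x - μ)) / (2 * s^2))))) x := by
    intro x
    have h1 : HasDerivAt (fun x : ℝ => x + μ) 1 x := (hasDerivAt_id x).add_const μ
    have h2 : HasDerivAt (fun x : ℝ => -(x - μ)^2 / (2 * s^2))
        (-(2 * (x - μ)) / (2 * s^2)) x := by
      have h3 := ((((hasDerivAt_id x).sub_const μ).pow 2).neg).div_const (2 * s^2)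
      refine HasDerivAt.congr_deriv (f := fun x : ℝ => -(x - μ)^2 / (2 * s^2)) h3 ?_
      simp
    exact (h1.mul h2.exp).const_mul _
  have key : ∀ x : ℝ, (s / p * (1 * Real.exp (-(x - μ)^2 / (2 * s^2)) + (x + μ) *
        (Real.exp (-(x - μ)^2 / (2 * s^2)) * (-(2 * (x - μ)) / (2 * s^2)))))
      = (1 - x^2) * (1 / (s * p) * Real.exp (-(x - μ)^2 / (2 * s^2))) := by
    intro x
    generalize Real.exp (-(x - μ)^2 / (2 * s^2)) = e
    field_simp
    rw [hsq]
    ring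
  have hint := intervalIntegral.integral_eq_sub_of_hasDerivAt
    (a := -a) (b := a) (fun x _ => (key x) ▸ hF x)
    (Continuous.intervalIntegrable (by fun_prop) _ _)
  rw [hint, show (-a - μ)^2 = (a + μ)^2 by ring]
  ring
end

section
/- For all μ ∈ [0, 1) and all a ≥ 0, [(2μ² − a² − 1)(1 − aμ) + 2μ²(1 − μ²)] · exp(aμ/(1 − μ²)) − [(2μ² − a² − 1)(1 + aμ) + 2μ²(1 − μ²)] · exp(−aμ/(1 − μ²)) ≥ 0. -/
lemma aux_h (x : ℝ) (hx : 0 ≤ x) :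
    0 ≤ (2*x-3) + (2*x^2+4*x+3) * Real.exp (-(2*x)) := by
  have hd : ∀ y : ℝ, HasDerivAt (fun x : ℝ => (2*x-3) + (2*x^2+4*x+3) * Real.exp (-(2*x)))
      (2 - (4*y^2+4*y+2) * Real.exp (-(2*y))) y := by
    intro y
    have h1 : HasDerivAt (fun x : ℝ => 2*x) 2 y := by
      simpa using (hasDerivAt_id y).const_mul 2
    have h2 : HasDerivAt (fun x : ℝ => x^2) (2*y) y := by
      simpa using hasDerivAt_pow 2 y
    have h4 : HasDerivAt (fun x : ℝ => 4*x) 4 y := by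
      simpa using (hasDerivAt_id y).const_mul 4
    have h5 := (h1.sub_const 3).add
      ((((h2.const_mul 2).add h4).add_const 3).mul (h1.neg.exp))
    refine h5.congr_deriv ?_
    simp only [Pi.add_apply, Pi.neg_apply]
    ring
  have hm : MonotoneOn (fun x : ℝ => (2*x-3) + (2*x^2+4*x+3) * Real.exp (-(2*x)))
      (Set.Ici 0) := by
    apply monotoneOn_of_deriv_nonneg (convex_Ici 0)
    · exact fun y _ => (hd y).continuousAt.continuousWithinAt
    · exact fun y _ => (hd y).differentiableAt.differentiableWithinAt
    · intro y hy
      rw [interior_Ici] at hy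
      have hy : 0 < y := hy
      rw [(hd y).deriv]
      have h := Real.quadratic_le_exp_of_nonneg (x := 2*y) (by linarith)
      have he : Real.exp (2*y) * Real.exp (-(2*y)) = 1 := by
        rw [← Real.exp_add]; simp
      have := mul_le_mul_of_nonneg_right h (Real.exp_pos (-(2*y))).le
      nlinarith
  have := hm (Set.mem_Ici.2 le_rfl) (Set.mem_Ici.2 hx) hx
  simp at this
  linarith

set_option maxHeartbeats 1000000 in
theorem critical_inequality (μ a : ℝ) (hμ0 : 0 ≤ μ) (hμ1 : μ < 1) (ha : 0 ≤ a) :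
    ((2*μ^2 - a^2 - 1)*(1 - a*μ) + 2*μ^2*(1 - μ^2)) * Real.exp (a*μ/(1 - μ^2))
      - ((2*μ^2 - a^2 - 1)*(1 + a*μ) + 2*μ^2*(1 - μ^2)) * Real.exp (-(a*μ)/(1 - μ^2)) ≥ 0 := by
  obtain ⟨s, hs⟩ : ∃ s, s = 1 - μ^2 := ⟨_, rfl⟩
  have hs0 : 0 < s := by nlinarith
  have hs1 : s ≤ 1 := by nlinarith
  rw [neg_div, ← hs]
  obtain ⟨x, hxd⟩ : ∃ x, x = a*μ/s := ⟨_, rfl⟩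
  have hx : 0 ≤ x := by rw [hxd]; positivity
  have hsx : a*μ = s*x := by rw [hxd]; field_simp
  rw [← hxd]
  have hE := Real.exp_pos x
  have hE' := Real.exp_pos (-x)
  have hEE : Real.exp x * Real.exp (-x) = 1 := by rw [← Real.exp_add]; simp
  have e2 : Real.exp (-(2*x)) = Real.exp (-x) * Real.exp (-x) := by
    rw [← Real.exp_add]; ring_nf
  have h3 := mul_nonneg hE.le (aux_h x hx)
  have h1 := mul_le_mul_of_nonneg_right (Real.add_one_le_exp (2*x)) hE'.le
  have e3 : Real.exp (2*x) * Real.exp (-x) = Real.exp x := by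
    rw [← Real.exp_add]; ring_nf
  rw [e3] at h1
  have h3' : 0 ≤ (2*x-3) * Real.exp x + (2*x^2+4*x+3) * Real.exp (-x) := by
    have : Real.exp x * ((2*x-3) + (2*x^2+4*x+3) * Real.exp (-(2*x)))
      = (2*x-3) * Real.exp x + (2*x^2+4*x+3) * Real.exp (-x) := by
      rw [e2]; linear_combination (2*x^2+4*x+3) * Real.exp (-x) * hEE
    rwa [this] at h3
  obtain ⟨S, hS⟩ : ∃ S, S = Real.exp x - Real.exp (-x) := ⟨_, rfl⟩
  obtain ⟨C, hC⟩ : ∃ C, C = Real.exp x + Real.exp (-x) := ⟨_, rfl⟩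
  have hC0 : 0 < C := by rw [hC]; positivity
  have hS0 : 0 ≤ S := by
    have := mul_nonneg hx hE'.le
    rw [hS]; linarith
  have hlow : x * C ≤ (1+x) * S := by rw [hS, hC]; linarith
  have hup : (3+x+x^2) * S ≤ x*(3+x)*C := by rw [hS, hC]; linarith
  have hup1 : S ≤ x * C := by
    have h : (3+x) * S ≤ (3+x) * (x*C) := by linarith [mul_nonneg (sq_nonneg x) hS0]
    exact le_of_mul_le_mul_left h (by linarith)
  have hm2 : μ^2 = 1 - s := by linarith
  have hax : a^2*(1-s) = s^2*x^2 := by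
    rw [← hm2]; linear_combination (a*μ+s*x)*hsx
  have goal_eq : ((2*μ^2 - a^2 - 1)*(1 - a*μ) + 2*μ^2*s) * Real.exp x
      - ((2*μ^2 - a^2 - 1)*(1 + a*μ) + 2*μ^2*s) * Real.exp (-x)
      = (1-2*s^2-a^2)*S + (a^2+2*s-1)*(s*x)*C := by
    rw [hS, hC, hm2, hsx]; ring
  rw [goal_eq, ge_iff_le]
  have hxC : 0 ≤ x*C := by positivity
  rcases le_total 0 (a^2+2*s-1) with hQ | hQ
  · rcases le_total 0 (1-2*s^2-a^2) with hP | hP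
    · positivity
    · rcases le_total a 1 with h | h
      · have ha1 : 0 ≤ (1-s)*(1-a^2) := mul_nonneg (by linarith) (by nlinarith)
        have := mul_le_mul_of_nonpos_left hup1 hP
        linarith [mul_nonneg ha1 hxC]
      · have hb : 0 ≤ a^2-1 := by nlinarith
        have key : 0 ≤ a^2*(a^2-1+2*s) - (a^2-1)*(3*s+s*x) := by
          have h6 : s*x ≤ (a^2+(1-s))/2 := by
            rw [← hm2, ← hsx]; linarith [two_mul_le_add_sq a μ]
          have := mul_le_mul_of_nonneg_left h6 hb
          linarith [sq_nonneg (a^2-1-s/2), mul_nonneg hs0.le (sub_nonneg.2 hs1)]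
        have key2 : 0 ≤ (a^2+2*s-1)*s*(3+x+x^2) + (1-2*s^2-a^2)*(3+x) := by
          have h7 : 0 ≤ (1-s) * (a^2*(a^2-1+2*s) - (a^2-1)*(3*s+s*x)) :=
            mul_nonneg (by linarith) key
          have h8 : s * ((a^2+2*s-1)*s*(3+x+x^2) + (1-2*s^2-a^2)*(3+x))
            = (1-s) * (a^2*(a^2-1+2*s) - (a^2-1)*(3*s+s*x)) := by
            linear_combination -(a^2-1+2*s)*hax
          rw [← h8] at h7
          exact nonneg_of_mul_nonneg_right h7 hs0
        have h9 := mul_le_mul_of_nonpos_left hup hP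
        have h10 := mul_nonneg key2 hxC
        have h11 : 0 ≤ (3+x+x^2) * ((1-2*s^2-a^2)*S + (a^2+2*s-1)*(s*x)*C) := by
          linarith
        exact nonneg_of_mul_nonneg_right h11 (by positivity)
  · have haμ : a ≤ μ := (sq_le_sq₀ ha hμ0).1 (by linarith)
    have hP : 0 ≤ 1-2*s^2-a^2 := by linarith [mul_nonneg hs0.le (sub_nonneg.2 hs1)]
    have h9 := mul_le_mul_of_nonneg_left hlow hP
    have h12 : s*x ≤ 1-s := by rw [← hsx, ← hm2]; linarith [mul_le_mul_of_nonneg_right haμ hμ0]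
    have h13 : 0 ≤ (1-2*s^2-a^2) + (a^2+2*s-1)*(s*(1+x)) := by
      linarith [mul_nonneg (neg_nonneg.2 hQ) (sub_nonneg.2 h12), mul_nonneg hs0.le (sub_nonneg.2 hs1)]
    have h10 := mul_nonneg h13 hxC
    have h11 : 0 ≤ (1+x) * ((1-2*s^2-a^2)*S + (a^2+2*s-1)*(s*x)*C) := by
      linarith
    exact nonneg_of_mul_nonneg_right h11 (by positivity)
end

section
/- For all μ ∈ [0, 1) and all a ∈ [0, 1], [(2μ² − a² − 1)(1 − aμ) + 2μ²(1 − μ²)] · exp(aμ/(1 − μ²)) − [(2μ² − a² − 1)(1 + aμ) + 2μ²(1 − μ²)] · exp(−aμ/(1 − μ²)) ≥ 0. -/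
lemma aux_sinh_le_s8 (x : ℝ) (hx : 0 ≤ x) : Real.sinh x ≤ x * Real.cosh x := by
  have hd : ∀ y : ℝ, HasDerivAt (fun y => y * Real.cosh y - Real.sinh y) (y * Real.sinh y) y := by
    intro y
    have h := ((hasDerivAt_id y).mul (Real.hasDerivAt_cosh y)).sub (Real.hasDerivAt_sinh y)
    refine HasDerivAt.congr_deriv (f := fun y => y * Real.cosh y - Real.sinh y) h ?_
    simp only [id]
    ring
  have hm : MonotoneOn (fun y : ℝ => y * Real.cosh y - Real.sinh y) (Set.Ici 0) := by
    apply monotoneOn_of_deriv_nonneg (convex_Ici 0)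
    · exact fun y _ => (hd y).continuousAt.continuousWithinAt
    · exact fun y _ => (hd y).differentiableAt.differentiableWithinAt
    · intro y hy
      rw [(hd y).deriv]
      have h0 : 0 ≤ y := interior_subset hy
      exact mul_nonneg h0 (Real.sinh_nonneg_iff.2 h0)
  have h := hm (Set.mem_Ici.2 le_rfl) (Set.mem_Ici.2 hx) hx
  simp at h
  linarith

lemma aux_le_sinh (x : ℝ) : x * Real.cosh x ≤ (1 + x) * Real.sinh x := by
  have h1 := Real.add_one_le_exp (2 * x)
  have h2 : Real.exp (2 * x) * Real.exp (-x) = Real.exp x := by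
    rw [← Real.exp_add]; ring_nf
  have h3 := mul_le_mul_of_nonneg_right h1 (Real.exp_pos (-x)).le
  rw [Real.cosh_eq, Real.sinh_eq]
  linarith

theorem critical_inequality_small_a (μ a : ℝ) (hμ0 : 0 ≤ μ) (hμ1 : μ < 1)
    (ha0 : 0 ≤ a) (ha1 : a ≤ 1) :
    ((2*μ^2 - a^2 - 1)*(1 - a*μ) + 2*μ^2*(1 - μ^2)) * Real.exp (a*μ/(1 - μ^2))
      - ((2*μ^2 - a^2 - 1)*(1 + a*μ) + 2*μ^2*(1 - μ^2)) * Real.exp (-(a*μ)/(1 - μ^2)) ≥ 0 := by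
  obtain ⟨s, hs⟩ : ∃ s, s = 1 - μ^2 := ⟨_, rfl⟩
  have hs0 : 0 < s := by nlinarith
  have hs1 : s ≤ 1 := by nlinarith
  obtain ⟨c, hc⟩ : ∃ c, c = 1 - a^2 := ⟨_, rfl⟩
  have hc0 : 0 ≤ c := by nlinarith
  obtain ⟨x, hx⟩ : ∃ x, x = a*μ/(1 - μ^2) := ⟨_, rfl⟩
  have hsx : s * x = a * μ := by rw [hx, ← hs]; field_simp
  have hx0 : 0 ≤ x := by rw [hx, ← hs]; positivity
  have hS : 0 ≤ Real.sinh x := Real.sinh_nonneg_iff.2 hx0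
  have key : s * (c - 2*s) * (x * Real.cosh x) ≤ (c - 2*s^2) * Real.sinh x := by
    rcases le_total c (2*s) with h | h
    · have h1 := mul_le_mul_of_nonneg_left (aux_sinh_le_s8 x hx0)
        (mul_nonneg hs0.le (sub_nonneg.2 h))
      have h2 := mul_nonneg (mul_nonneg hc0 (sub_nonneg.2 hs1)) hS
      nlinarith
    · have ham : a ≤ μ := by nlinarith
      have h1 : s * (1 + x) ≤ 1 := by nlinarith
      have h2 : s * (x * Real.cosh x) ≤ Real.sinh x := by
        have h3 := mul_le_mul_of_nonneg_left (aux_le_sinh x) hs0.le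
        have h4 := mul_le_mul_of_nonneg_right h1 hS
        linarith
      have h5 := mul_le_mul_of_nonneg_left h2 (sub_nonneg.2 h)
      have h6 := mul_nonneg (mul_nonneg hs0.le (sub_nonneg.2 hs1)) hS
      linarith
  rw [neg_div, ← hx, ← hsx, ← hs]
  have e1 : μ^2 = 1 - s := by linarith
  have e2 : a^2 = 1 - c := by linarith
  rw [e1, e2]
  rw [Real.cosh_eq, Real.sinh_eq] at key
  linarith
end

section
/- For all μ ∈ [0, 1) and all a > 1, [(2μ² − a² − 1)(1 − aμ) + 2μ²(1 − μ²)] · exp(aμ/(1 − μ²)) − [(2μ² − a² − 1)(1 + aμ) + 2μ²(1 − μ²)] · exp(−aμ/(1 − μ²)) ≥ 0. -/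
lemma aux_exp (u : ℝ) (hu : 0 ≤ u) :
    0 ≤ Real.exp (-u) * (3 + 2*u + u^2/2) + u - 3 := by
  have hd : ∀ x : ℝ, HasDerivAt (fun u : ℝ => Real.exp (-u) * (3 + 2*u + u^2/2) + u - 3)
      (1 - Real.exp (-x) * (1 + x + x^2/2)) x := by
    intro x
    have h1 : HasDerivAt (fun u : ℝ => Real.exp (-u)) (Real.exp (-x) * (-1)) x :=
      (hasDerivAt_id x).neg.exp
    have h2 : HasDerivAt (fun u : ℝ => 3 + 2*u + u^2/2) (2*1 + (2*x)/2) x := by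
      have h3 : HasDerivAt (fun u : ℝ => u^2) (2*x) x := by
        simpa using hasDerivAt_pow 2 x
      exact (((hasDerivAt_id x).const_mul 2).const_add 3).add (h3.div_const 2)
    have h4 := ((h1.mul h2).add (hasDerivAt_id x)).sub_const 3
    refine h4.congr_deriv ?_
    ring
  have hm : MonotoneOn (fun u : ℝ => Real.exp (-u) * (3 + 2*u + u^2/2) + u - 3) (Set.Ici 0) := by
    apply monotoneOn_of_deriv_nonneg (convex_Ici 0)
    · exact fun x _ => (hd x).continuousAt.continuousWithinAt
    · exact fun x _ => (hd x).differentiableAt.differentiableWithinAt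
    · intro x hx
      rw [interior_Ici] at hx
      rw [(hd x).deriv]
      have h := Real.quadratic_le_exp_of_nonneg (le_of_lt hx)
      have h' := mul_le_mul_of_nonneg_left h (Real.exp_pos (-x)).le
      rw [← Real.exp_add, neg_add_cancel, Real.exp_zero] at h'
      linarith
  have := hm (Set.self_mem_Ici) (Set.mem_Ici.2 hu) hu
  simp at this
  linarith

lemma aux_poly (μ a : ℝ) (hμ0 : 0 ≤ μ) (hμ1 : μ < 1) (ha : 1 < a) :
    0 ≤ (a^2-3)*μ^2 - a*(a^2-1)*μ + (a^4 - 2*a^2+3) := by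
  have h1 : 0 ≤ a^2*(a-1)^2*(a+1) := by positivity
  rcases le_total (a^2) 3 with h | h
  · have e : (a^2-3)*μ^2 - a*(a^2-1)*μ + (a^4 - 2*a^2+3) =
      (1-μ)*((a^2-1)^2+2) + μ*(a*(a-1)^2*(a+1)) + (3-a^2)*(μ*(1-μ)) := by ring
    rw [e]
    have : 0 ≤ 1 - μ := by linarith
    have : 0 ≤ 3 - a^2 := by linarith
    positivity
  · have e : (a^2-3)*μ^2 - a*(a^2-1)*μ + (a^4 - 2*a^2+3) =
      a*(a-1)^2*(a+1) + (1-μ)*(a*(a^2-1) - (a^2-3)*(1+μ)) := by ring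
    rw [e]
    have : 0 ≤ 1 - μ := by linarith
    have : 0 ≤ a*(a^2-1) - (a^2-3)*(1+μ) := by
      have h2 : 0 ≤ (a^2-3)*(1-μ) := mul_nonneg (by linarith) (by linarith)
      nlinarith
    positivity

theorem critical_inequality_large_a (μ a : ℝ) (hμ0 : 0 ≤ μ) (hμ1 : μ < 1) (ha : 1 < a) :
    ((2*μ^2 - a^2 - 1)*(1 - a*μ) + 2*μ^2*(1 - μ^2)) * Real.exp (a*μ/(1 - μ^2))
      - ((2*μ^2 - a^2 - 1)*(1 + a*μ) + 2*μ^2*(1 - μ^2)) * Real.exp (-(a*μ)/(1 - μ^2)) ≥ 0 := by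
  have hs : 0 < 1 - μ^2 := by nlinarith
  rw [neg_div]
  obtain ⟨t, ht⟩ : ∃ t, t = a*μ/(1-μ^2) := ⟨_, rfl⟩
  rw [← ht]
  have hts : a*μ = t*(1-μ^2) := by rw [ht]; field_simp
  have ht0 : 0 ≤ t := by rw [ht]; positivity
  have hE := Real.exp_pos t
  have hF := Real.exp_pos (-t)
  have hA := aux_exp (2*t) (by linarith)
  have hk : 0 ≤ Real.exp (-t) * (3+4*t+2*t^2) + Real.exp t * (2*t-3) := by
    have h := mul_nonneg hE.le hA
    have e : Real.exp t * Real.exp (-(2*t)) = Real.exp (-t) := by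
      rw [← Real.exp_add]; congr 1; ring
    have : Real.exp t * (Real.exp (-(2*t)) * (3 + 2*(2*t) + (2*t)^2/2) + 2*t - 3) =
      (Real.exp t * Real.exp (-(2*t))) * (3+4*t+2*t^2) + Real.exp t * (2*t-3) := by ring
    rw [this, e] at h
    exact h
  have hP := aux_poly μ a hμ0 hμ1 ha
  generalize Real.exp t = E at *
  generalize Real.exp (-t) = F at *
  obtain ⟨s, hsd⟩ : ∃ s, s = 1-μ^2 := ⟨_, rfl⟩
  have hK : 0 ≤ a^2+1-2*μ^2 := by nlinarith
  have hD : 0 ≤ a^2+1-2*μ^2 - 2*μ^2*s := by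
    have : a^2+1-2*μ^2 - 2*μ^2*s = (a^2-1) + 2*s^2 := by rw [hsd]; ring
    rw [this]; nlinarith [sq_nonneg s]
  rw [← hsd] at hs hts ⊢
  have hR : 0 ≤ (a^2+1-2*μ^2)*s*(3+t+t^2) - (a^2+1-2*μ^2 - 2*μ^2*s)*(3+t) := by
    have e : s * ((a^2+1-2*μ^2)*s*(3+t+t^2) - (a^2+1-2*μ^2 - 2*μ^2*s)*(3+t)) =
        μ^2 * ((a^2-3)*μ^2 - a*(a^2-1)*μ + (a^4 - 2*a^2+3)) := by
      have : s * ((a^2+1-2*μ^2)*s*(3+t+t^2) - (a^2+1-2*μ^2 - 2*μ^2*s)*(3+t)) =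
        (a^2+1-2*μ^2)*(3*s^2+(t*s)*s+(t*s)^2) - (a^2+1-2*μ^2 - 2*μ^2*s)*(3*s+t*s) := by ring
      rw [this, ← hts, hsd]; ring
    have h0 : 0 ≤ s * ((a^2+1-2*μ^2)*s*(3+t+t^2) - (a^2+1-2*μ^2 - 2*μ^2*s)*(3+t)) := by
      rw [e]; positivity
    exact nonneg_of_mul_nonneg_right h0 hs
  generalize hKd : a^2+1-2*μ^2 = K at *
  generalize hDd : K - 2*μ^2*s = D at *
  have e : ((2*μ^2 - a^2 - 1)*(1 - a*μ) + 2*μ^2*s) * E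
      - ((2*μ^2 - a^2 - 1)*(1 + a*μ) + 2*μ^2*s) * F =
      K*(t*s)*(E+F) - D*(E-F) := by
    rw [← hts, ← hDd, ← hKd]; ring
  rw [e]
  have h1 : (3+t+t^2) * (K*(t*s)*(E+F) - D*(E-F)) =
      (E+F)*t*(K*s*(3+t+t^2) - D*(3+t)) + D*(F*(3+4*t+2*t^2) + E*(2*t-3)) := by ring
  have h2 : 0 ≤ (3+t+t^2) * (K*(t*s)*(E+F) - D*(E-F)) := by
    rw [h1]; positivity
  exact nonneg_of_mul_nonneg_right h2 (by positivity)
end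

section
/- For all μ ∈ [0, 1), [1 − μ − 2μ² + μ³ + μ⁴] · exp(μ/(1 − μ²)) − [1 + μ − 2μ² − μ³ + μ⁴] · exp(−μ/(1 − μ²)) ≤ 0. -/
lemma sinh_le_mul_cosh_aux (t : ℝ) (ht : 0 ≤ t) : Real.sinh t ≤ t * Real.cosh t := by
  have hd : ∀ x : ℝ, HasDerivAt (fun x => x * Real.cosh x - Real.sinh x) (x * Real.sinh x) x := by
    intro x
    have h := ((hasDerivAt_id' x).mul (Real.hasDerivAt_cosh x)).sub (Real.hasDerivAt_sinh x)
    exact h.congr_deriv (by ring)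
  have hm : MonotoneOn (fun x : ℝ => x * Real.cosh x - Real.sinh x) (Set.Ici 0) := by
    apply monotoneOn_of_deriv_nonneg (convex_Ici 0)
    · exact fun x _ => (hd x).continuousAt.continuousWithinAt
    · exact fun x _ => (hd x).differentiableAt.differentiableWithinAt
    · intro x hx
      rw [interior_Ici] at hx
      rw [(hd x).deriv]
      exact mul_nonneg (le_of_lt hx) (Real.sinh_nonneg_iff.2 (le_of_lt hx))
  have h := hm (Set.mem_Ici.2 le_rfl) (Set.mem_Ici.2 ht) ht
  simp at h
  linarith

theorem boundary_inequality_first_level (μ : ℝ) (hμ0 : 0 ≤ μ) (hμ1 : μ < 1) :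
    (1 - μ - 2*μ^2 + μ^3 + μ^4) * Real.exp (μ/(1 - μ^2))
      - (1 + μ - 2*μ^2 - μ^3 + μ^4) * Real.exp (-μ/(1 - μ^2)) ≤ 0 := by
  have hd : 0 < 1 - μ^2 := by nlinarith
  obtain ⟨t, ht⟩ : ∃ t, t = μ / (1 - μ^2) := ⟨_, rfl⟩
  have ht0 : 0 ≤ t := by rw [ht]; positivity
  have hμ : t * (1 - μ^2) = μ := by rw [ht]; field_simp
  have h := sinh_le_mul_cosh_aux t ht0
  rw [Real.sinh_eq, Real.cosh_eq] at h
  rw [neg_div, ← ht]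
  have hA : 1 - μ - 2*μ^2 + μ^3 + μ^4 = (1 - μ^2)^2 * (1 - t) := by
    linear_combination (1 - μ^2) * hμ
  have hB : 1 + μ - 2*μ^2 - μ^3 + μ^4 = (1 - μ^2)^2 * (1 + t) := by
    linear_combination -(1 - μ^2) * hμ
  rw [hA, hB]
  have h2 : (1 - t) * Real.exp t - (1 + t) * Real.exp (-t) ≤ 0 := by linarith
  have h3 := mul_nonpos_of_nonneg_of_nonpos (sq_nonneg (1 - μ^2)) h2
  linarith
end

section
/- For all μ ∈ [0, 1) and all a ≥ 1, [−2 + 5μ² + a³μ³ − 4μ⁴ + 2μ⁶ + a²μ²(5 − 6μ²) + aμ(2 − 7μ² + 4μ⁴)] · exp(aμ/(1 − μ²)) − [−2 + 5μ² − a³μ³ − 4μ⁴ + 2μ⁶ + a²μ²(5 − 6μ²) − aμ(2 − 7μ² + 4μ⁴)] · exp(−aμ/(1 − μ²)) ≥ 0. -/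
theorem aux_sinh_le_s12 (x : ℝ) (hx : 0 ≤ x) :
    Real.exp x - Real.exp (-x) ≤ x * (Real.exp x + Real.exp (-x)) := by
  have hd : ∀ y : ℝ, HasDerivAt (fun y : ℝ => y * Real.cosh y - Real.sinh y)
      (y * Real.sinh y) y := by
    intro y
    have h := ((hasDerivAt_id y).mul (Real.hasDerivAt_cosh y)).sub (Real.hasDerivAt_sinh y)
    exact h.congr_deriv (by simp only [id]; ring)
  have hmono : MonotoneOn (fun y : ℝ => y * Real.cosh y - Real.sinh y) (Set.Ici 0) := by
    apply monotoneOn_of_deriv_nonneg (convex_Ici 0)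
    · exact fun y _ => (hd y).continuousAt.continuousWithinAt
    · exact fun y _ => (hd y).differentiableAt.differentiableWithinAt
    · intro y hy
      rw [interior_Ici] at hy
      rw [(hd y).deriv]
      exact mul_nonneg (le_of_lt hy) (Real.sinh_nonneg_iff.2 (le_of_lt hy))
  have h := hmono (Set.mem_Ici.2 le_rfl) (Set.mem_Ici.2 hx) hx
  simp only [Real.sinh_zero, zero_mul, sub_zero] at h
  rw [Real.cosh_eq, Real.sinh_eq] at h
  linarith

theorem aux_core_s12 (m t x u v : ℝ) (hm0 : 0 < m) (hm1 : m ≤ 1) (ht0 : 0 ≤ t)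
    (ht : 1 - m ≤ t^2) (hx : x * m = t) (hv : 0 < v) (huv : v ≤ u)
    (h1 : u - v ≤ x * (u + v)) (h2 : (1 + 2*x) * v ≤ u) :
    0 ≤ (1 - 3*m + 2*m^2 - 2*m^3 + t^2*(6*m-1)) * (u - v)
      + t*(t^2 + 4*m^2 - m - 1) * (u + v) := by
  have hx0 : 0 ≤ x := by
    by_contra h
    push Not at h
    nlinarith
  set A := 1 - 3*m + 2*m^2 - 2*m^3 + t^2*(6*m-1) with hA
  rcases lt_or_ge A 0 with hneg | hpos
  · rcases lt_or_ge m (1/7) with hm | hm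
    · have ht' : 9/10 ≤ t := by
        by_contra h
        push Not at h
        nlinarith
      have hP : 0 ≤ A + t*(t^2 + 4*m^2 - m - 1) := by
        have e : A + t*(t^2 + 4*m^2 - m - 1)
          = (1-t)^2*(1+t) + m*(-3+6*t^2-t) + m^2*(2+4*t-2*m) := by rw [hA]; ring
        rw [e]
        have : 0 ≤ -3+6*t^2-t := by nlinarith
        have : 0 ≤ 2+4*t-2*m := by linarith
        positivity
      have hB : 0 ≤ t*(t^2 + 4*m^2 - m - 1) := by linarith
      nlinarith [mul_nonneg hP (sub_nonneg.2 huv), mul_nonneg hB hv.le]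
    · have hS : 0 ≤ A * x + t*(t^2 + 4*m^2 - m - 1) := by
        have e : A * x + t*(t^2 + 4*m^2 - m - 1)
          = x * ((t^2 - (1-m)) * (7*m-1) + 2*m*((1-m)*(2-m))) := by
          rw [hA]; subst hx; ring
        rw [e]
        have a1 : 0 ≤ t^2 - (1-m) := by linarith
        have a2 : 0 ≤ 7*m-1 := by linarith
        have a3 : 0 ≤ 1-m := by linarith
        have a4 : 0 ≤ 2-m := by linarith
        positivity
      have := mul_le_mul_of_nonpos_left h1 hneg.le
      nlinarith [mul_nonneg hS (by linarith : 0 ≤ u + v)]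
  · rcases le_or_gt 0 (t^2 + 4*m^2 - m - 1) with hB | hB
    · have := mul_nonneg hpos (sub_nonneg.2 huv)
      have := mul_nonneg (mul_nonneg ht0 hB) (by linarith : 0 ≤ u + v)
      linarith
    · have hm : m < 1/2 := by nlinarith
      have htu : t ≤ 33/32 := by nlinarith [sq_nonneg (m - 1/8)]
      have ht7 : 7/10 ≤ t := by nlinarith
      have hx' : 5/4 ≤ x := by nlinarith
      have huv' : 7/2 * v ≤ u := by nlinarith
      have hk : 0 ≤ A * (5/9) + 33/32*(t^2 + 4*m^2 - m - 1) := by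
        rw [hA]
        nlinarith [mul_nonneg hm0.le hm0.le, mul_nonneg (mul_nonneg hm0.le hm0.le) hm0.le,
          mul_nonneg hm0.le (sub_nonneg.2 ht), mul_nonneg hm0.le (sub_nonneg.2 hm.le)]
      have hk2 : 0 ≤ A * (5/9) + t*(t^2 + 4*m^2 - m - 1) := by nlinarith
      have h3 : (5/9) * (u+v) ≤ u - v := by linarith
      nlinarith [mul_le_mul_of_nonneg_left h3 hpos, mul_nonneg hk2 (by linarith : 0 ≤ u + v)]

theorem derivative_inequality_second_level (μ a : ℝ) (hμ0 : 0 ≤ μ) (hμ1 : μ < 1) (ha : 1 ≤ a) :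
    (-2 + 5*μ^2 + a^3*μ^3 - 4*μ^4 + 2*μ^6 + a^2*μ^2*(5 - 6*μ^2) + a*μ*(2 - 7*μ^2 + 4*μ^4))
        * Real.exp (a*μ/(1 - μ^2))
      - (-2 + 5*μ^2 - a^3*μ^3 - 4*μ^4 + 2*μ^6 + a^2*μ^2*(5 - 6*μ^2) - a*μ*(2 - 7*μ^2 + 4*μ^4))
        * Real.exp (-(a*μ)/(1 - μ^2)) ≥ 0 := by
  have hm0 : 0 < 1 - μ^2 := by nlinarith
  have ht0 : 0 ≤ a*μ := by positivity
  have hx0 : 0 ≤ a*μ/(1 - μ^2) := by positivity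
  rw [neg_div]
  have hxm : a*μ/(1 - μ^2) * (1 - μ^2) = a*μ := div_mul_cancel₀ _ hm0.ne'
  generalize a*μ/(1 - μ^2) = x at *
  have h2 : (1 + 2*x) * Real.exp (-x) ≤ Real.exp x := by
    have h := mul_le_mul_of_nonneg_right (Real.add_one_le_exp (2*x)) (Real.exp_pos (-x)).le
    rw [← Real.exp_add] at h
    ring_nf at h ⊢
    linarith
  have h := aux_core_s12 (1-μ^2) (a*μ) x (Real.exp x) (Real.exp (-x)) hm0
    (by nlinarith [sq_nonneg μ]) ht0 (by nlinarith [sq_nonneg μ, mul_le_mul_of_nonneg_right ha hμ0])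
    hxm (Real.exp_pos _) (Real.exp_le_exp.2 (by linarith)) (aux_sinh_le_s12 x hx0) h2
  linarith
end

section
/- For all μ ∈ [0, 1) and all a ≥ 1, [a³μ² + a²μ(8 − 9μ²) − μ(4 − 7μ² + 2μ⁴) + a(12 − 29μ² + 16μ⁴)] · exp((1 + aμ)/(1 − μ²)) − [a³μ² − a²μ(8 − 9μ²) + μ(4 − 7μ² + 2μ⁴) + a(12 − 29μ² + 16μ⁴)] · exp((1 − aμ)/(1 − μ²)) ≥ 0. -/
theorem derivative_inequality_third_level (μ a : ℝ) (hμ0 : 0 ≤ μ) (hμ1 : μ < 1) (ha : 1 ≤ a) :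
    (a^3*μ^2 + a^2*μ*(8 - 9*μ^2) - μ*(4 - 7*μ^2 + 2*μ^4) + a*(12 - 29*μ^2 + 16*μ^4))
        * Real.exp ((1 + a*μ)/(1 - μ^2))
      - (a^3*μ^2 - a^2*μ*(8 - 9*μ^2) + μ*(4 - 7*μ^2 + 2*μ^4) + a*(12 - 29*μ^2 + 16*μ^4))
        * Real.exp ((1 - a*μ)/(1 - μ^2)) ≥ 0 := by
  have hs : 0 < 1 - μ^2 := by nlinarith
  have hd : 0 ≤ a - 1 := by linarith
  have hm : 0 ≤ 1 - μ := by linarith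
  have hm2 : μ^2 ≤ 1 := by linarith
  have hm3 : μ^3 ≤ 1 := pow_le_one₀ hμ0 hμ1.le
  -- the first coefficient is at least `2 (1 - μ²)`
  have hP : 2*(1 - μ^2) ≤ a^3*μ^2 + a^2*μ*(8 - 9*μ^2) - μ*(4 - 7*μ^2 + 2*μ^4)
      + a*(12 - 29*μ^2 + 16*μ^4) := by
    have h3 : 0 ≤ (a-1)^3 * μ^2 := by positivity
    have h2 : 0 ≤ (a-1)^2 * (μ*(8+3*μ-9*μ^2)) :=
      mul_nonneg (by positivity) (mul_nonneg hμ0 (by nlinarith))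
    have h1 : 0 ≤ (a-1) * ((1-μ)*(12+28*μ+2*μ^2-16*μ^3)) :=
      mul_nonneg hd (mul_nonneg hm (by nlinarith))
    have h0 : 0 ≤ (1-μ^2) * ((1-μ)*(10+14*μ-2*μ^2)+ 2*μ^3*0) := by
      refine mul_nonneg hs.le ?_
      have : 0 ≤ (1-μ)*(10+14*μ-2*μ^2) := mul_nonneg hm (by nlinarith)
      linarith
    have h0' : 0 ≤ 12 - 28*μ^2 + 16*μ^4 + μ*(8-9*μ^2) - μ*(4-7*μ^2+2*μ^4) - 2*(1-μ^2) := by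
      have e : 12 - 28*μ^2 + 16*μ^4 + μ*(8-9*μ^2) - μ*(4-7*μ^2+2*μ^4) - 2*(1-μ^2)
        = (1-μ^2) * ((1-μ)*(10+14*μ-2*μ^2)) := by ring
      rw [e]; linarith
    nlinarith [h3, h2, h1, h0']
  set P := a^3*μ^2 + a^2*μ*(8 - 9*μ^2) - μ*(4 - 7*μ^2 + 2*μ^4)
      + a*(12 - 29*μ^2 + 16*μ^4) with hPdef
  set Q := a^3*μ^2 - a^2*μ*(8 - 9*μ^2) + μ*(4 - 7*μ^2 + 2*μ^4)
      + a*(12 - 29*μ^2 + 16*μ^4) with hQdef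
  have hP0 : 0 ≤ P := by linarith
  have hexp : Real.exp ((1 + a*μ)/(1 - μ^2))
      = Real.exp ((1 - a*μ)/(1 - μ^2)) * Real.exp (2*(a*μ)/(1-μ^2)) := by
    rw [← Real.exp_add]; congr 1; ring
  have key : Q ≤ P * Real.exp (2*(a*μ)/(1-μ^2)) := by
    by_cases hx : μ^2 ≤ 8/9
    · have hQP : Q ≤ P := by
        have : 0 ≤ μ * ((a^2-1)*(8-9*μ^2) + (1-μ^2)*(4+2*μ^2)) := by
          refine mul_nonneg hμ0 (add_nonneg (mul_nonneg (by nlinarith) (by linarith)) ?_)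
          positivity
        rw [hPdef, hQdef]; linarith
      have h1 : 1 ≤ Real.exp (2*(a*μ)/(1-μ^2)) := Real.one_le_exp (by positivity)
      nlinarith
    · push Not at hx
      have hQ : Q ≤ 2*a^3 := by
        have e1 : 12 - 29*μ^2 + 16*μ^4 ≤ 0 := by nlinarith
        have e2 : 4 - 7*μ^2 + 2*μ^4 ≤ 0 := by nlinarith
        have e3 : a*(12 - 29*μ^2 + 16*μ^4) ≤ 0 := by nlinarith
        have e4 : μ*(4 - 7*μ^2 + 2*μ^4) ≤ 0 := by nlinarith
        have e5 : a^3*μ^2 ≤ a^3 := mul_le_of_le_one_right (by positivity) hm2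
        have e6 : a^2*(μ*(9*μ^2-8)) ≤ a^2 :=
          mul_le_of_le_one_right (by positivity) (by nlinarith)
        have e7 : a^2 ≤ a^3 := pow_le_pow_right₀ ha (by norm_num)
        rw [hQdef]; linarith
      have hy : 0 ≤ a/(1-μ^2) := by positivity
      have h1 := Real.pow_div_factorial_le_exp _ hy 3
      have h2 : Real.exp (a/(1-μ^2)) ≤ Real.exp (2*(a*μ)/(1-μ^2)) := by
        apply Real.exp_le_exp.mpr
        apply div_le_div_of_nonneg_right _ hs.le
        nlinarith
      have h3 : 2*a^3 ≤ 2*(1-μ^2) * ((a/(1-μ^2))^3 / (Nat.factorial 3 : ℕ)) := by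
        have e : 2*(1-μ^2) * ((a/(1-μ^2))^3 / (Nat.factorial 3 : ℕ)) = a^3/(3*(1-μ^2)^2) := by
          norm_num [Nat.factorial]; field_simp; norm_num
        rw [e, le_div_iff₀ (by positivity)]
        have : 0 ≤ a^3 := by positivity
        have : 2*(3*(1-μ^2)^2) ≤ 1 := by nlinarith
        nlinarith
      calc Q ≤ 2*a^3 := hQ
        _ ≤ _ := h3
        _ ≤ P * Real.exp (2*(a*μ)/(1-μ^2)) :=
          mul_le_mul hP (h1.trans h2) (by positivity) hP0
  rw [hexp]
  have := mul_le_mul_of_nonneg_left key (Real.exp_pos ((1 - a*μ)/(1 - μ^2))).le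
  linarith
end

section
/- For all μ ∈ [0, 1), [−11 + 7μ + 31μ² − 22μ³ − 24μ⁴ + 11μ⁵ + 6μ⁶] · exp((0.5 + μ)/(1 − μ²)) − [−11 − 7μ + 31μ² + 22μ³ − 24μ⁴ − 11μ⁵ + 6μ⁶] · exp((0.5 − μ)/(1 − μ²)) ≤ 0. -/
theorem boundary_inequality_third_level (μ : ℝ) (hμ0 : 0 ≤ μ) (hμ1 : μ < 1) :
    (-11 + 7*μ + 31*μ^2 - 22*μ^3 - 24*μ^4 + 11*μ^5 + 6*μ^6) * Real.exp ((0.5 + μ)/(1 - μ^2))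
      - (-11 - 7*μ + 31*μ^2 + 22*μ^3 - 24*μ^4 - 11*μ^5 + 6*μ^6) * Real.exp ((0.5 - μ)/(1 - μ^2)) ≤ 0 := by
  have hd : 0 < 1 - μ^2 := by nlinarith
  have h1 : 0 ≤ 1 - μ := by linarith
  have hP : 0 ≤ 11 - 7*μ - 31*μ^2 + 22*μ^3 + 24*μ^4 - 11*μ^5 - 6*μ^6 := by
    nlinarith [mul_nonneg hμ0 h1, mul_nonneg (pow_nonneg hμ0 4) h1, mul_nonneg (pow_nonneg hμ0 5) h1,
      mul_nonneg (pow_nonneg hμ0 3) h1, mul_nonneg (pow_nonneg hμ0 2) h1,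
      sq_nonneg (μ^2 - 3/5), sq_nonneg (μ - 4/5), mul_nonneg hμ0 (sq_nonneg (μ - 4/5)), sq_nonneg (μ * (μ - 4/5))]
  have hPB : 0 ≤ 4 - 7*μ - 9*μ^2 + 22*μ^3 + 13*μ^4 - 11*μ^5 - 6*μ^6 := by
    nlinarith [mul_nonneg hμ0 h1, mul_nonneg (pow_nonneg hμ0 4) h1, mul_nonneg (pow_nonneg hμ0 5) h1,
      mul_nonneg (pow_nonneg hμ0 3) h1, mul_nonneg (pow_nonneg hμ0 2) h1,
      sq_nonneg (μ - 1/2), mul_nonneg hμ0 (sq_nonneg (μ - 1/2)), sq_nonneg (μ * (μ - 1/2))]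
  have hE : Real.exp ((0.5 + μ)/(1 - μ^2))
      = Real.exp ((0.5 - μ)/(1 - μ^2)) * Real.exp (2 * μ / (1 - μ^2)) := by
    rw [← Real.exp_add]; congr 1; ring
  have ht : 2 * μ ≤ 2 * μ / (1 - μ^2) := by
    rw [le_div_iff₀ hd]
    nlinarith [pow_nonneg hμ0 3]
  have he : 1 + 2 * μ ≤ Real.exp (2 * μ / (1 - μ^2)) := by
    linarith [Real.add_one_le_exp (2 * μ / (1 - μ^2))]
  rw [hE]
  have hX := Real.exp_pos ((0.5 - μ)/(1 - μ^2))
  generalize Real.exp ((0.5 - μ)/(1 - μ^2)) = X at *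
  generalize Real.exp (2 * μ / (1 - μ^2)) = Y at *
  have key : 0 ≤ (11 - 7*μ - 31*μ^2 + 22*μ^3 + 24*μ^4 - 11*μ^5 - 6*μ^6) * Y
      + (-11 - 7*μ + 31*μ^2 + 22*μ^3 - 24*μ^4 - 11*μ^5 + 6*μ^6) := by
    have a := mul_nonneg hP (sub_nonneg.2 he)
    have b := mul_nonneg hμ0 hPB
    linarith
  have := mul_nonneg hX.le key
  linarith
end
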